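/- arXiv:1805.06854 — 3 statements merged into one kernel-verified Lean document; each statement's English description precedes it below -/
import Mathlib

section
/- Let p be a prime, k a field of characteristic p, G = (ℤ/p)^n, and A = k[x_1,…,x_n] graded by deg(x_i) = −1. If C is a free and finitely generated p-complex of k[G]-modules, then dim_k {}_sH_•(β(C)) < ∞ for all 1 ≤ s ≤ p−1. -/
/-! Statement 14 (Lemma 5.9): if `C` is a free, finitely generated `p`-complex of
`k[G]`-modules (`G = (ℤ/p)ⁿ`, `char k = p`), then `dim_k ₛH(β(C)) < ∞` for all
`1 ≤ s ≤ p-1`, where `β(C) = C ⊗_k A` (`A = k[x_1,…,x_n]`) with differential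
`d(c ⊗ f) = d(c) ⊗ f + Σ_i y_i c ⊗ x_i f` and `y_i = e_i - 1 ∈ k[G]`. -/

open scoped TensorProduct

/-- The group algebra `k[(ℤ/p)ⁿ]`. -/
abbrev GroupRing (p n : ℕ) (k : Type) [Field k] : Type := AddMonoidAlgebra k (Fin n → ZMod p)

/-- A `ℤ`-graded `N`-complex of modules over the group algebra `k[(ℤ/p)ⁿ]`:
a module with an internal grading and a degree `-1` differential `d` with `d ^ N = 0`. -/
structure KGCx (p n : ℕ) (k : Type) [Field k] (N : ℕ) : Type 1 where
  X : Type
  [acg : AddCommGroup X]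
  [modR : Module (GroupRing p n k) X]
  [modk : Module k X]
  [tower : IsScalarTower k (GroupRing p n k) X]
  d : X →ₗ[GroupRing p n k] X
  gr : ℤ → Submodule (GroupRing p n k) X
  internal : DirectSum.IsInternal gr
  d_deg : ∀ m : ℤ, ∀ x ∈ gr m, d x ∈ gr (m - 1)
  d_pow : d ^ N = 0

attribute [instance] KGCx.acg KGCx.modR KGCx.modk KGCx.tower

namespace KGCx

variable {p n N : ℕ} {k : Type} [Field k] (C : KGCx p n k N)

/-- Perfect: the underlying graded module has a finite homogeneous basis over the group ring
(i.e. it is a bounded complex of finitely generated free modules). -/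
def IsPerfect : Prop :=
  ∃ (ι : Type) (_ : Fintype ι) (deg : ι → ℤ) (b : Module.Basis ι (GroupRing p n k) C.X),
    ∀ a, b a ∈ C.gr (deg a)

/-- Non-acyclic: the (total) homology is nonzero. -/
def NonAcyclic : Prop := ∃ x : C.X, C.d x = 0 ∧ x ∉ LinearMap.range C.d

/-- The differential as a `k`-linear map. -/
noncomputable def dk : C.X →ₗ[k] C.X := C.d.restrictScalars k

/-- The total homology `ker d ⧸ im d` as a `k`-vector space; its dimension is
`Σ_i dim_k H_i(C)`. -/
noncomputable abbrev TotalHomology : Type :=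
  ↥(LinearMap.ker C.dk) ⧸ (LinearMap.range C.dk).comap (LinearMap.ker C.dk).subtype

end KGCx

/-- The polynomial ring `A = k[x_1,…,x_n]`. -/
abbrev PolyA (n : ℕ) (k : Type) [Field k] : Type := MvPolynomial (Fin n) k

/-- The differential of `β(C) = C ⊗_k A`:
`d(c ⊗ f) = d(c) ⊗ f + Σ_i y_i c ⊗ x_i f`, where `y_i = e_i - 1` in the group ring. -/
noncomputable def betaD {p n N : ℕ} {k : Type} [Field k] (C : KGCx p n k N) :
    (C.X ⊗[k] PolyA n k) →ₗ[k] (C.X ⊗[k] PolyA n k) :=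
  TensorProduct.map (C.d.restrictScalars k) LinearMap.id +
    ∑ i : Fin n,
      TensorProduct.map
        ((((AddMonoidAlgebra.single (Pi.single i (1 : ZMod p)) (1 : k) : GroupRing p n k) - 1) •
            (LinearMap.id : C.X →ₗ[GroupRing p n k] C.X)).restrictScalars k)
        (LinearMap.mulLeft k (MvPolynomial.X i))


section Ring

variable {E : Type*} [Ring E] {p : ℕ}

theorem cast_pred_choose_eq_neg_one_pow (hp : p.Prime) (h0 : (p : E) = 0) {i : ℕ} (hi : i < p) :
    ((p - 1).choose i : E) = (-1) ^ i := by
  induction i with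
  | zero => simp
  | succ i ih =>
    have hpas : (p - 1).choose i + (p - 1).choose (i + 1) = p.choose (i + 1) := by
      obtain ⟨q, rfl⟩ := Nat.exists_eq_succ_of_ne_zero hp.ne_zero
      simp [Nat.choose_succ_succ]
    obtain ⟨c, hc⟩ := hp.dvd_choose_self (Nat.succ_ne_zero i) hi
    have hsum : ((p - 1).choose i : E) + ((p - 1).choose (i + 1) : E) = 0 := by
      rw [← Nat.cast_add, hpas, hc, Nat.cast_mul, h0, zero_mul]
    rw [eq_neg_of_add_eq_zero_right hsum, ih (by omega), pow_succ, mul_neg_one]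

theorem cast_pred_factorial_eq_neg_one (hp : p.Prime) (h0 : (p : E) = 0) :
    ((p - 1).factorial : E) = -1 := by
  have := Fact.mk hp
  have hz : (((p - 1).factorial + 1 : ℕ) : ZMod p) = 0 := by
    push_cast
    rw [ZMod.wilsons_lemma]
    ring
  obtain ⟨c, hc⟩ := (ZMod.natCast_eq_zero_iff _ _).1 hz
  have h := congrArg (Nat.cast : ℕ → E) hc
  push_cast at h
  rw [h0, zero_mul] at h
  exact eq_neg_of_add_eq_zero_left h

theorem Commute.add_pow_prime_of_cast_eq_zero (hp : p.Prime) (h0 : (p : E) = 0) {a b : E}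
    (h : Commute a b) : (a + b) ^ p = a ^ p + b ^ p := by
  obtain ⟨r, hr⟩ := h.exists_add_pow_prime_eq hp
  rw [hr, h0]
  simp

theorem Commute.sub_pow_pred_prime_of_cast_eq_zero (hp : p.Prime) (h0 : (p : E) = 0) {a b : E}
    (h : Commute a b) :
    (a - b) ^ (p - 1) = ∑ i ∈ Finset.range p, a ^ i * b ^ (p - 1 - i) := by
  rw [← neg_sub b a, sub_eq_add_neg, neg_add, neg_neg, add_comm, (h.neg_right).add_pow,
    Nat.sub_add_cancel hp.one_le]
  refine Finset.sum_congr rfl fun i hi => ?_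
  have hi' : i < p := Finset.mem_range.1 hi
  rw [← Nat.choose_symm (by omega : i ≤ p - 1),
    cast_pred_choose_eq_neg_one_pow hp h0 (by omega), mul_assoc,
    ← (Commute.neg_one_right (-b)).mul_pow, mul_neg_one, neg_neg]

/-- The operator `u ↦ D * u - u * D`. -/
def commutatorMap (D : E) : Module.End ℤ E := LinearMap.mulLeft ℤ D - LinearMap.mulRight ℤ D

theorem commutatorMap_apply (D u : E) : commutatorMap D u = D * u - u * D := rfl

theorem commutatorMap_pow_pred_prime (hp : p.Prime) (h0 : (p : E) = 0) (D h : E) :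
    (commutatorMap D ^ (p - 1)) h = ∑ i ∈ Finset.range p, D ^ i * h * D ^ (p - 1 - i) := by
  have h0' : (p : Module.End ℤ E) = 0 := by
    ext u
    simp [Module.End.natCast_apply, ← Nat.cast_smul_eq_nsmul E, h0]
  rw [commutatorMap,
    Commute.sub_pow_pred_prime_of_cast_eq_zero hp h0'
      (LinearMap.commute_mulLeft_right D D)]
  simp [LinearMap.sum_apply, LinearMap.pow_mulLeft, LinearMap.pow_mulRight, mul_assoc]

theorem commutatorMap_pow (D y z : E) (hz : ∀ e, Commute z e) (hy : D * y - y * D = z) (m : ℕ) :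
    commutatorMap D (y ^ (m + 1)) = (m + 1 : ℕ) * (y ^ m * z) := by
  rw [commutatorMap_apply]
  induction m with
  | zero => simp [hy]
  | succ m ih =>
    have h : D * y ^ (m + 1 + 1) - y ^ (m + 1 + 1) * D
        = (D * y ^ (m + 1) - y ^ (m + 1) * D) * y + y ^ (m + 1) * (D * y - y * D) := by
      rw [pow_succ y (m + 1)]
      noncomm_ring
    rw [h, ih, hy, mul_assoc, mul_assoc, (hz y).eq, ← mul_assoc (y ^ m), ← pow_succ]
    push_cast
    noncomm_ring

theorem iterate_commutatorMap_pow (D y z : E) (hz : ∀ e, Commute z e) (hy : D * y - y * D = z)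
    (m : ℕ) (c : E) (hc : Commute D c) :
    (commutatorMap D ^ m) (y ^ m * c) = m.factorial * (z ^ m * c) := by
  induction m generalizing c with
  | zero => simp
  | succ m ih =>
    have h : commutatorMap D (y ^ (m + 1) * c) = y ^ m * ((m + 1 : ℕ) * (z * c)) := by
      have := commutatorMap_pow D y z hz hy m
      rw [commutatorMap_apply] at this ⊢
      rw [mul_assoc, ← hc.eq, ← mul_assoc, ← mul_assoc, ← sub_mul, this, mul_assoc, mul_assoc,
        ← mul_assoc, ← mul_assoc, (Nat.cast_commute (m + 1) (y ^ m)).eq]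
      simp only [mul_assoc]
    rw [pow_succ, Module.End.mul_apply, h,
      ih _ ((Nat.cast_commute _ _).symm.mul_right ((hz D).symm.mul_right hc)),
      Nat.factorial_succ, ← mul_assoc (z ^ m), ← (Nat.cast_commute (m + 1) (z ^ m)).eq, mul_assoc,
      ← mul_assoc (z ^ m), ← pow_succ, ← mul_assoc, ← Nat.cast_mul, mul_comm (m + 1)]

/-- If `[D, y] = z` is central, then `∑ D ^ i * y ^ (p - 1) * D ^ (p - 1 - i) = - z ^ (p - 1)`
in characteristic `p`. -/
theorem sum_pow_mul_pow_mul_pow (hp : p.Prime) (h0 : (p : E) = 0) (D y z : E)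
    (hz : ∀ e, Commute z e) (hy : D * y - y * D = z) :
    ∑ i ∈ Finset.range p, D ^ i * y ^ (p - 1) * D ^ (p - 1 - i) = - z ^ (p - 1) := by
  rw [← commutatorMap_pow_pred_prime hp h0]
  have := iterate_commutatorMap_pow D y z hz hy (p - 1) 1 (Commute.one_right _)
  rw [mul_one, mul_one, cast_pred_factorial_eq_neg_one hp h0] at this
  rw [this, neg_one_mul]

theorem commute_sum_pow_mul_pow (D h : E) (hD : D ^ p = 0) :
    Commute D (∑ i ∈ Finset.range p, D ^ i * h * D ^ (p - 1 - i)) := by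
  have key : ∀ i ∈ Finset.range p, D * (D ^ i * h * D ^ (p - 1 - i)) -
      D ^ i * h * D ^ (p - 1 - i) * D = D ^ (i + 1) * h * D ^ (p - (i + 1)) -
        D ^ i * h * D ^ (p - i) := by
    intro i hi
    have hi' := Finset.mem_range.1 hi
    have h1 : p - i = (p - 1 - i) + 1 := by omega
    have h2 : p - (i + 1) = p - 1 - i := by omega
    rw [h1, h2, pow_succ' D i, pow_succ D (p - 1 - i)]
    noncomm_ring
  rw [commute_iff_eq, ← sub_eq_zero, Finset.mul_sum, Finset.sum_mul, ← Finset.sum_sub_distrib,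
    Finset.sum_congr rfl key, Finset.sum_range_sub (fun i => D ^ i * h * D ^ (p - i))]
  simp [hD]

end Ring

section Filtration

variable {A M : Type*} [CommRing A] [AddCommGroup M] [Module A M]

/-- Endomorphisms which shift the filtration `F` by `r`. -/
def shiftEnd (F : ℕ → Submodule A M) (r : ℕ) : Submodule A (Module.End A M) where
  carrier := {T | ∀ j, ∀ m ∈ F j, T m ∈ F (j + r)}
  add_mem' hS hT j m hm := add_mem (hS j m hm) (hT j m hm)
  zero_mem' j _ _ := zero_mem (F (j + r))
  smul_mem' a _ hT j m hm := (F (j + r)).smul_mem a (hT j m hm)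

variable {F : ℕ → Submodule A M}

theorem mul_mem_shiftEnd {r s : ℕ} {S T : Module.End A M} (hS : S ∈ shiftEnd F r)
    (hT : T ∈ shiftEnd F s) : S * T ∈ shiftEnd F (s + r) := fun j m hm => by
  rw [← add_assoc]
  exact hS _ _ (hT j m hm)

theorem one_mem_shiftEnd : (1 : Module.End A M) ∈ shiftEnd F 0 := fun _ _ hm => hm

theorem pow_mem_shiftEnd {r : ℕ} {T : Module.End A M} (hT : T ∈ shiftEnd F r) (i : ℕ) :
    T ^ i ∈ shiftEnd F (i * r) := by
  induction i with
  | zero => simpa using one_mem_shiftEnd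
  | succ i ih =>
    rw [pow_succ', Nat.succ_mul]
    exact mul_mem_shiftEnd hT ih

theorem mul_sub_mul_mem_shiftEnd {S T S' T' : Module.End A M} (hS : S ∈ shiftEnd F 0)
    (hT' : T' ∈ shiftEnd F 0) (hSS' : S - S' ∈ shiftEnd F 1) (hTT' : T - T' ∈ shiftEnd F 1) :
    S * T - S' * T' ∈ shiftEnd F 1 := by
  have h : S * T - S' * T' = S * (T - T') + (S - S') * T' := by noncomm_ring
  rw [h]
  exact add_mem (mul_mem_shiftEnd hS hTT') (mul_mem_shiftEnd hSS' hT')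

theorem pow_sub_pow_mem_shiftEnd {S S' : Module.End A M} (hS : S ∈ shiftEnd F 0)
    (hS' : S' ∈ shiftEnd F 0) (hSS' : S - S' ∈ shiftEnd F 1) (i : ℕ) :
    S ^ i - S' ^ i ∈ shiftEnd F 1 := by
  induction i with
  | zero => simp
  | succ i ih =>
    rw [pow_succ, pow_succ]
    exact mul_sub_mul_mem_shiftEnd (by simpa using pow_mem_shiftEnd hS i) hS' ih hSS'

/-- Let `D = D₀ + d` satisfy `D ^ p = 0`, where `D₀` and `y` preserve a finite filtration, `d`
strictly shifts it, and `[y, D₀] = x` is a scalar. Then a power of `x` annihilates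
`ker (D ^ s) / im (D ^ (p - s))`. -/
theorem exists_pow_smul_mem_range {p : ℕ} (hp : p.Prime) (h0 : (p : Module.End A M) = 0)
    {N : ℕ} (hF0 : F 0 = ⊤) (hFN : F N = ⊥) (hanti : ∀ j, F (j + 1) ≤ F j)
    (D₀ d y : Module.End A M) (x : A) (hD₀ : D₀ ∈ shiftEnd F 0) (hd : d ∈ shiftEnd F 1)
    (hy : y ∈ shiftEnd F 0) (hD : (D₀ + d) ^ p = 0)
    (hx : y * D₀ - D₀ * y = algebraMap A (Module.End A M) x) {s : ℕ}
    (hsp : s ≤ p) (w : M) (hw : ((D₀ + d) ^ s) w = 0) :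
    x ^ ((p - 1) * N) • w ∈ LinearMap.range ((D₀ + d) ^ (p - s)) := by
  set D := D₀ + d with hDdef
  set z : Module.End A M := algebraMap A _ (-x) with hz
  have hzc : ∀ e : Module.End A M, Commute z e := fun e => Algebra.commutes _ _
  set K := ∑ i ∈ Finset.range p, D ^ i * y ^ (p - 1) * D ^ (p - 1 - i) with hK
  have hd0 : d ∈ shiftEnd F 0 := fun j m hm => hanti j (hd j m hm)
  have hDD₀ : D - D₀ ∈ shiftEnd F 1 := by simpa [hDdef] using hd
  have hDF : D ∈ shiftEnd F 0 := add_mem hD₀ hd0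
  have pow0 : ∀ {S : Module.End A M}, S ∈ shiftEnd F 0 → ∀ i, S ^ i ∈ shiftEnd F 0 :=
    fun hS i => by simpa using pow_mem_shiftEnd hS i
  have hKz : K + z ^ (p - 1) ∈ shiftEnd F 1 := by
    have hsum := sum_pow_mul_pow_mul_pow hp h0 D₀ y z hzc
      (by rw [hz, map_neg, ← hx, neg_sub])
    rw [← neg_neg (z ^ (p - 1)), ← hsum, ← sub_eq_add_neg, hK, ← Finset.sum_sub_distrib]
    refine sum_mem fun i _ => ?_
    refine mul_sub_mul_mem_shiftEnd (mul_mem_shiftEnd (pow0 hDF _) (pow0 hy _)) (pow0 hD₀ _) ?_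
      (pow_sub_pow_mem_shiftEnd hDF hD₀ hDD₀ _)
    exact mul_sub_mul_mem_shiftEnd (pow0 hDF _) (pow0 hy _)
      (pow_sub_pow_mem_shiftEnd hDF hD₀ hDD₀ _) (by simp)
  set T := K + z ^ (p - 1) with hT
  have hTN : T ^ N = 0 := by
    ext m
    have := pow_mem_shiftEnd hKz N 0 m (by simp [hF0])
    simpa [hFN] using this
  have hDK : Commute D K := commute_sum_pow_mul_pow D _ hD
  have hDz : Commute D (z ^ (p - 1)) := ((hzc D).pow_left _).symm
  have hDT : Commute D T := hDK.add_right hDz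
  set Q := ∑ i ∈ Finset.range N, T ^ i * (z ^ (p - 1)) ^ (N - 1 - i) with hQ
  have hDQ : Commute D Q :=
    Commute.sum_right _ _ _ fun i _ => (hDT.pow_right _).mul_right (hDz.pow_right _)
  have hKQ : K * Q = - (z ^ (p - 1)) ^ N := by
    have := ((hzc T).pow_left (p - 1)).symm.mul_geom_sum₂ N
    rw [← hQ, hTN, zero_sub] at this
    rw [← this]
    simp [hT]
  have hQw : (D ^ s) (Q w) = 0 := by
    rw [← Module.End.mul_apply, (hDQ.pow_left s).eq, Module.End.mul_apply, hw, map_zero]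
  have hmem : K (Q w) ∈ LinearMap.range (D ^ (p - s)) := by
    rw [hK, LinearMap.sum_apply]
    refine sum_mem fun i hi => ?_
    have hi' := Finset.mem_range.1 hi
    by_cases his : p - s ≤ i
    · refine ⟨(D ^ (i - (p - s))) ((y ^ (p - 1)) ((D ^ (p - 1 - i)) (Q w))), ?_⟩
      rw [← Module.End.mul_apply, ← pow_add, Nat.add_sub_cancel' his]
      rfl
    · have : p - 1 - i = (p - 1 - i - s) + s := by omega
      rw [this, pow_add, Module.End.mul_apply, Module.End.mul_apply, Module.End.mul_apply, hQw]
      simp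
  rw [← Module.End.mul_apply, hKQ, hz, ← map_pow, ← map_pow, ← map_neg,
    Module.algebraMap_end_apply, ← pow_mul, neg_pow] at hmem
  have hunit := Submodule.smul_mem _ ((-1 : A) ^ ((p - 1) * N + 1)) hmem
  rw [smul_smul] at hunit
  convert hunit using 2
  have hsq : ((-1 : A) ^ ((p - 1) * N)) * ((-1 : A) ^ ((p - 1) * N)) = 1 := by
    rw [← mul_pow]
    simp
  rw [pow_succ]
  linear_combination (-(x ^ ((p - 1) * N))) * hsq

end Filtration

section FiniteGeneration

variable {k M : Type*} [Field k] {n : ℕ} [AddCommGroup M] [Module (MvPolynomial (Fin n) k) M]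
  [Module k M] [IsScalarTower k (MvPolynomial (Fin n) k) M]

theorem exists_finite_span_sup_of_pow_smul_mem [IsNoetherian (MvPolynomial (Fin n) k) M]
    (Z B : Submodule (MvPolynomial (Fin n) k) M) (N : ℕ)
    (h : ∀ i, ∀ z ∈ Z, (MvPolynomial.X i : MvPolynomial (Fin n) k) ^ N • z ∈ B) :
    ∃ (m : ℕ) (g : Fin m → M), (∀ j, g j ∈ Z) ∧
      Z.restrictScalars k ≤ B.restrictScalars k ⊔ Submodule.span k (Set.range g) := by
  classical
  obtain ⟨S, hS⟩ := IsNoetherian.noetherian Z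
  have hSZ : ∀ z ∈ S, z ∈ Z := fun z hz => hS ▸ Submodule.subset_span hz
  let G : Finset M := ((Finset.Iic (Finsupp.equivFunOnFinite.symm fun _ : Fin n => N)) ×ˢ S).image
    fun q => MvPolynomial.monomial q.1 (1 : k) • q.2
  refine ⟨G.card, fun j => (G.equivFin.symm j : M), fun j => ?_, fun z hz => ?_⟩
  · obtain ⟨q, hq, hqj⟩ := Finset.mem_image.1 (G.equivFin.symm j).2
    simp only [← hqj]
    exact Z.smul_mem _ (hSZ _ (Finset.mem_product.1 hq).2)
  · have hrange : Set.range (fun j => (G.equivFin.symm j : M)) = G := by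
      ext m
      constructor
      · rintro ⟨j, rfl⟩
        exact (G.equivFin.symm j).2
      · intro hm
        exact ⟨G.equivFin ⟨m, hm⟩, by simp⟩
    rw [hrange]
    have hmono : ∀ (a : Fin n →₀ ℕ), ∀ m ∈ S, MvPolynomial.monomial a (1 : k) • m ∈
        B.restrictScalars k ⊔ Submodule.span k (G : Set M) := by
      intro a m hm
      by_cases ha : a ≤ Finsupp.equivFunOnFinite.symm fun _ : Fin n => N
      · refine Submodule.mem_sup_right (Submodule.subset_span ?_)
        exact Finset.mem_image.2 ⟨(a, m), Finset.mem_product.2 ⟨Finset.mem_Iic.2 ha, hm⟩, rfl⟩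
      · refine Submodule.mem_sup_left ?_
        obtain ⟨i, hi⟩ : ∃ i, N < a i := by
          by_contra! hcon
          exact ha fun i => hcon i
        have hsplit : MvPolynomial.monomial a (1 : k) =
            MvPolynomial.monomial (a - Finsupp.single i N) 1 * MvPolynomial.X i ^ N := by
          rw [MvPolynomial.X_pow_eq_monomial, MvPolynomial.monomial_mul, one_mul,
            tsub_add_cancel_of_le (Finsupp.single_le_iff.2 hi.le)]
        rw [hsplit, mul_smul]
        exact B.smul_mem _ (h i m (hSZ m hm))
    have hz' : z ∈ Submodule.span (MvPolynomial (Fin n) k) (S : Set M) := hS ▸ hz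
    have hall : ∀ f : MvPolynomial (Fin n) k, f • z ∈
        B.restrictScalars k ⊔ Submodule.span k (G : Set M) := by
      refine Submodule.span_induction (fun m hm f => ?_) (fun f => by simp)
        (fun m m' _ _ hm hm' f => by rw [smul_add]; exact add_mem (hm f) (hm' f))
        (fun f m _ hm f' => by rw [smul_smul]; exact hm _) hz'
      rw [f.as_sum, Finset.sum_smul]
      refine sum_mem fun a _ => ?_
      rw [← mul_one (f.coeff a), ← smul_eq_mul, ← MvPolynomial.smul_monomial, smul_assoc]
      exact Submodule.smul_mem _ _ (hmono a m hm)
    simpa using hall 1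

end FiniteGeneration

section KoszulEnd

variable {k V : Type*} [Field k] [AddCommGroup V] [Module k V] {n : ℕ}

/-- The operator `d + ∑ xᵢ yᵢ` on `k[x₁, …, xₙ] ⊗ V`. -/
noncomputable def koszulEnd (d : Module.End k V) (y : Fin n → Module.End k V) :
    Module.End (MvPolynomial (Fin n) k) (MvPolynomial (Fin n) k ⊗[k] V) :=
  ∑ i, (MvPolynomial.X i : MvPolynomial (Fin n) k) • (y i).baseChange _ + d.baseChange _

theorem sum_pow_prime_eq_zero {E ι : Type*} [Ring E] {p : ℕ} (hp : p.Prime) (h0 : (p : E) = 0)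
    (f : ι → E) (hf : ∀ i j, Commute (f i) (f j)) (hpow : ∀ i, f i ^ p = 0) (s : Finset ι) :
    (∑ i ∈ s, f i) ^ p = 0 := by
  classical
  induction s using Finset.induction_on with
  | empty => simp [hp.ne_zero]
  | insert a s ha ih =>
    rw [Finset.sum_insert ha, Commute.add_pow_prime_of_cast_eq_zero hp h0
      (Commute.sum_right _ _ _ fun i _ => hf a i), hpow, ih, add_zero]

theorem koszulEnd_pow_prime {p : ℕ} (hp : p.Prime)
    (h0 : (p : Module.End (MvPolynomial (Fin n) k) (MvPolynomial (Fin n) k ⊗[k] V)) = 0)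
    (d : Module.End k V) (y : Fin n → Module.End k V) (hd : d ^ p = 0) (hy : ∀ i, y i ^ p = 0)
    (hdy : ∀ i, Commute (y i) d) (hyy : ∀ i j, Commute (y i) (y j)) :
    koszulEnd d y ^ p = 0 := by
  have hcomm : ∀ {f g : Module.End k V}, Commute f g →
      Commute (f.baseChange (MvPolynomial (Fin n) k)) (g.baseChange (MvPolynomial (Fin n) k)) :=
    fun h => h.map (Module.End.baseChangeHom k (MvPolynomial (Fin n) k) V)
  rw [koszulEnd, Commute.add_pow_prime_of_cast_eq_zero hp h0
    (Commute.sum_left _ _ _ fun i _ => (hcomm (hdy i)).smul_left _),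
    ← LinearMap.baseChange_pow, hd, LinearMap.baseChange_zero, add_zero]
  refine sum_pow_prime_eq_zero hp h0 _
    (fun i j => ((hcomm (hyy i j)).smul_left _).smul_right _) (fun i => ?_) _
  rw [smul_pow, ← LinearMap.baseChange_pow, hy, LinearMap.baseChange_zero, smul_zero]

theorem baseChange_mem_shiftEnd {A : Type*} [CommRing A] [Algebra k A]
    {F : ℕ → Submodule k V} {r : ℕ} {T : Module.End k V} (hT : T ∈ shiftEnd F r) :
    T.baseChange A ∈ shiftEnd (fun j => (F j).baseChange A) r := by
  rintro j _ ⟨t, rfl⟩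
  induction t with
  | zero => simp
  | add t t' ht ht' =>
    rw [map_add, map_add]
    exact add_mem ht ht'
  | tmul a m => exact Submodule.tmul_mem_baseChange_of_mem a (hT j m m.2)

theorem commutator_sum_smul {A E ι : Type*} [CommRing A] [Ring E] [Algebra A E] [Fintype ι]
    (x : ι → A) (y : ι → E) (u : E) (i : ι) (h : u * y i = y i * u + 1)
    (h' : ∀ j ≠ i, Commute u (y j)) :
    u * (∑ j, x j • y j) - (∑ j, x j • y j) * u = algebraMap A E (x i) := by
  rw [Finset.mul_sum, Finset.sum_mul, ← Finset.sum_sub_distrib, Finset.sum_eq_single i]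
  · rw [mul_smul_comm, smul_mul_assoc, ← smul_sub, h, add_sub_cancel_left,
      Algebra.algebraMap_eq_smul_one]
  · intro j _ hj
    rw [mul_smul_comm, smul_mul_assoc, ← smul_sub, (h' j hj).eq, sub_self, smul_zero]
  · simp

theorem exists_finite_span_ker_koszulEnd [Module.Finite k V] {p : ℕ} (hp : p.Prime)
    (hk : (p : k) = 0) (d : Module.End k V) (y δ : Fin n → Module.End k V)
    (hd : d ^ p = 0) (hy : ∀ i, y i ^ p = 0)
    (hdy : ∀ i, Commute (y i) d) (hyy : ∀ i j, Commute (y i) (y j))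
    (hδ : ∀ i, δ i * y i = y i * δ i + 1) (hδy : ∀ i j, i ≠ j → Commute (δ i) (y j))
    {F : ℕ → Submodule k V} {N : ℕ} (hF0 : F 0 = ⊤) (hFN : F N = ⊥)
    (hanti : ∀ j, F (j + 1) ≤ F j) (hdF : d ∈ shiftEnd F 1) (hyF : ∀ i, y i ∈ shiftEnd F 0)
    (hδF : ∀ i, δ i ∈ shiftEnd F 0) {s : ℕ} (hs : s ≤ p) :
    ∃ (m : ℕ) (g : Fin m → MvPolynomial (Fin n) k ⊗[k] V),
      (∀ j, g j ∈ LinearMap.ker (koszulEnd d y ^ s)) ∧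
      (LinearMap.ker (koszulEnd d y ^ s)).restrictScalars k ≤
        (LinearMap.range (koszulEnd d y ^ (p - s))).restrictScalars k ⊔
          Submodule.span k (Set.range g) := by
  have h0 : (p : Module.End (MvPolynomial (Fin n) k) (MvPolynomial (Fin n) k ⊗[k] V)) = 0 := by
    rw [← map_natCast (algebraMap k _), hk, map_zero]
  have hδ' : ∀ i, ((δ i).baseChange (MvPolynomial (Fin n) k) : Module.End _ _) *
      (∑ j, (MvPolynomial.X j : MvPolynomial (Fin n) k) •
        ((y j).baseChange _ : Module.End _ (MvPolynomial (Fin n) k ⊗[k] V))) -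
      (∑ j, (MvPolynomial.X j : MvPolynomial (Fin n) k) •
        ((y j).baseChange _ : Module.End _ (MvPolynomial (Fin n) k ⊗[k] V))) *
        (δ i).baseChange _ =
      algebraMap (MvPolynomial (Fin n) k) (Module.End _ _) (MvPolynomial.X i) := by
    intro i
    let φ := Module.End.baseChangeHom k (MvPolynomial (Fin n) k) V
    exact commutator_sum_smul (E := Module.End _ (MvPolynomial (Fin n) k ⊗[k] V))
      (MvPolynomial.X : Fin n → MvPolynomial (Fin n) k) (fun j => φ (y j)) (φ (δ i)) i
      (by rw [← map_mul, hδ, map_add, map_mul, map_one]) fun j hj => (hδy i j hj.symm).map φ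
  have hpow := koszulEnd_pow_prime hp h0 d y hd hy hdy hyy
  let F₁ : ℕ → Submodule (MvPolynomial (Fin n) k) (MvPolynomial (Fin n) k ⊗[k] V) :=
    fun j => (F j).baseChange _
  have hF₁0 : F₁ 0 = ⊤ := by simp [F₁, hF0]
  have hF₁N : F₁ N = ⊥ := by simp [F₁, hFN]
  have hF₁ : ∀ j, F₁ (j + 1) ≤ F₁ j := fun j => Submodule.baseChange_mono _ (hanti j)
  have hD₀F : ∑ j, (MvPolynomial.X j : MvPolynomial (Fin n) k) •
      ((y j).baseChange _ : Module.End _ (MvPolynomial (Fin n) k ⊗[k] V)) ∈ shiftEnd F₁ 0 :=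
    sum_mem fun j _ => Submodule.smul_mem _ _ (baseChange_mem_shiftEnd (hyF j))
  have hdF₁ : d.baseChange (MvPolynomial (Fin n) k) ∈ shiftEnd F₁ 1 := baseChange_mem_shiftEnd hdF
  have hsmul : ∀ i, ∀ w ∈ LinearMap.ker (koszulEnd d y ^ s),
      (MvPolynomial.X i : MvPolynomial (Fin n) k) ^ ((p - 1) * N) • w ∈
        LinearMap.range (koszulEnd d y ^ (p - s)) := fun i w hw =>
    exists_pow_smul_mem_range (F := F₁) hp h0 hF₁0 hF₁N hF₁ _ _ _ (MvPolynomial.X i)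
      hD₀F hdF₁ (baseChange_mem_shiftEnd (hδF i)) hpow (hδ' i) hs w hw
  exact exists_finite_span_sup_of_pow_smul_mem _ _ _ hsmul

end KoszulEnd

section GroupRingDerivation

variable {p n : ℕ} {k : Type} [Field k]

/-- The element `yᵢ = eᵢ - 1` of the group ring. -/
noncomputable abbrev groupRingY (p : ℕ) {n : ℕ} (k : Type) [Field k] (i : Fin n) :
    GroupRing p n k :=
  AddMonoidAlgebra.single (Pi.single i (1 : ZMod p)) (1 : k) - 1

theorem groupRingY_pow_prime (hp : p.Prime) (hk : (p : k) = 0) (i : Fin n) :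
    groupRingY p k i ^ p = 0 := by
  have h0 : (p : GroupRing p n k) = 0 := by
    rw [← map_natCast (algebraMap k _), hk, map_zero]
  have h := Commute.add_pow_prime_of_cast_eq_zero hp h0 (Commute.one_right (groupRingY p k i))
  rw [sub_add_cancel, AddMonoidAlgebra.single_pow, one_pow, one_pow, ← Pi.single_smul,
    nsmul_one, CharP.cast_eq_zero, Pi.single_zero, ← AddMonoidAlgebra.one_def] at h
  exact right_eq_add.1 h

variable [CharP k p]

/-- The derivation `∂/∂yᵢ` of the group ring. -/
noncomputable def groupRingDeriv (i : Fin n) : GroupRing p n k →ₗ[k] GroupRing p n k :=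
  (AddMonoidAlgebra.basis (Fin n → ZMod p) k).constr k fun g =>
    AddMonoidAlgebra.single (g - Pi.single i 1) (ZMod.castHom dvd_rfl k (g i))

theorem groupRingDeriv_single (i : Fin n) (g : Fin n → ZMod p) :
    groupRingDeriv i (AddMonoidAlgebra.single g (1 : k)) =
      AddMonoidAlgebra.single (g - Pi.single i 1) (ZMod.castHom dvd_rfl k (g i)) := by
  rw [groupRingDeriv, ← AddMonoidAlgebra.basis_apply, Module.Basis.constr_basis]

theorem groupRingDeriv_mul (i j : Fin n) (c : GroupRing p n k) :
    groupRingDeriv i (groupRingY p k j * c) =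
      groupRingY p k j * groupRingDeriv i c + if i = j then c else 0 := by
  have key : groupRingDeriv i ∘ₗ LinearMap.mulLeft k (groupRingY p k j) =
      LinearMap.mulLeft k (groupRingY p k j) ∘ₗ groupRingDeriv i +
        if i = j then LinearMap.id else 0 := by
    refine (AddMonoidAlgebra.basis (Fin n → ZMod p) k).ext fun g => ?_
    simp only [AddMonoidAlgebra.basis_apply, LinearMap.comp_apply, LinearMap.mulLeft_apply,
      LinearMap.add_apply, sub_mul, one_mul, AddMonoidAlgebra.single_mul_single, map_sub,
      groupRingDeriv_single, Pi.add_apply, map_add]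
    split_ifs with hij
    · subst hij
      simp [add_sub_assoc, AddMonoidAlgebra.single_add]
      abel
    · simp [Pi.single_eq_of_ne hij, add_sub_assoc]
  have := LinearMap.congr_fun key c
  simp only [LinearMap.comp_apply, LinearMap.mulLeft_apply, LinearMap.add_apply] at this
  rw [this]
  split_ifs <;> rfl

end GroupRingDerivation

section Coordinatewise

variable {k R X ι : Type*} [Field k] [CommRing R] [Algebra k R] [AddCommGroup X] [Module R X]
  [Module k X] [IsScalarTower k R X] [Fintype ι]

/-- Apply a `k`-linear endomorphism of `R` to all coordinates with respect to an `R`-basis. -/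
noncomputable def coordinatewise (b : Module.Basis ι R X) (f : R →ₗ[k] R) : Module.End k X :=
  (b.equivFun.symm.toLinearMap.restrictScalars k) ∘ₗ (f.compLeft ι) ∘ₗ
    (b.equivFun.toLinearMap.restrictScalars k)

theorem coordinatewise_apply (b : Module.Basis ι R X) (f : R →ₗ[k] R) (x : X) :
    coordinatewise b f x = ∑ a, f (b.repr x a) • b a := by
  simp [coordinatewise, Module.Basis.equivFun_symm_apply]

theorem coordinatewise_smul (b : Module.Basis ι R X) (f : R →ₗ[k] R) {r t : R}
    (h : ∀ c, f (r * c) = r * f c + t * c) (x : X) :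
    coordinatewise b f (r • x) = r • coordinatewise b f x + t • x := by
  conv_rhs => rw [← b.sum_repr (t • x)]
  simp only [coordinatewise_apply, map_smul, Finsupp.smul_apply, smul_eq_mul, h, add_smul,
    Finset.sum_add_distrib, mul_smul, Finset.smul_sum]

theorem coordinatewise_mem_span (b : Module.Basis ι R X) (f : R →ₗ[k] R) (I : Set ι) {x : X}
    (hx : x ∈ Submodule.span R (b '' I)) : coordinatewise b f x ∈ Submodule.span R (b '' I) := by
  rw [coordinatewise_apply]
  refine sum_mem fun a _ => ?_
  by_cases ha : b.repr x a = 0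
  · simp [ha]
  · exact Submodule.smul_mem _ _ (Submodule.subset_span ⟨a,
      b.mem_span_image.1 hx (Finsupp.mem_support_iff.2 ha), rfl⟩)

end Coordinatewise

theorem DirectSum.IsInternal.le_span_basis {R X ι J : Type*} [Ring R] [AddCommGroup X] [Module R X]
    [DecidableEq J] {gr : J → Submodule R X} (hgr : DirectSum.IsInternal gr) {deg : ι → J}
    (b : Module.Basis ι R X) (hb : ∀ a, b a ∈ gr (deg a)) (m : J) :
    gr m ≤ Submodule.span R (b '' {a | deg a = m}) := by
  intro x hx
  have htop : Submodule.span R (b '' {a | deg a = m}) ⊔ Submodule.span R (b '' {a | deg a ≠ m})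
      = ⊤ := by
    rw [← Submodule.span_union, ← Set.image_union, ← b.span_eq, ← Set.image_univ]
    congr 2
    ext a
    simp [em]
  obtain ⟨u, hu, v, hv, huv⟩ := Submodule.mem_sup.1 (htop ▸ Submodule.mem_top : x ∈ _)
  have hu' : u ∈ gr m := by
    refine Submodule.span_le.2 ?_ hu
    rintro _ ⟨a, rfl, rfl⟩
    exact hb a
  have hv' : v ∈ ⨆ j ≠ m, gr j := by
    refine Submodule.span_le.2 ?_ hv
    rintro _ ⟨a, ha, rfl⟩
    exact Submodule.mem_iSup_of_mem (deg a) (Submodule.mem_iSup_of_mem ha (hb a))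
  have hv0 : v = 0 := by
    refine Submodule.disjoint_def.1 (hgr.submodule_iSupIndep m) v ?_ hv'
    rw [← huv] at hx
    simpa using (gr m).sub_mem hx hu'
  rw [← huv, hv0, add_zero]
  exact hu

/-- Exchanging the tensor factors turns `betaD C` into `koszulEnd`. -/
theorem comm_betaD {p n N : ℕ} {k : Type} [Field k] (C : KGCx p n k N)
    (t : C.X ⊗[k] PolyA n k) :
    TensorProduct.comm k C.X (PolyA n k) (betaD C t) =
      koszulEnd C.dk (fun i => Module.toModuleEnd k (S := GroupRing p n k) C.X (groupRingY p k i))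
        (TensorProduct.comm k C.X (PolyA n k) t) := by
  induction t with
  | zero => simp
  | add t t' ht ht' => simp only [map_add, ht, ht']
  | tmul c f =>
    simp [betaD, koszulEnd, KGCx.dk, LinearMap.sum_apply, TensorProduct.smul_tmul', add_comm]

theorem comm_betaD_pow {p n N : ℕ} {k : Type} [Field k] (C : KGCx p n k N) (s : ℕ)
    (t : C.X ⊗[k] PolyA n k) :
    TensorProduct.comm k C.X (PolyA n k) ((betaD C ^ s) t) =
      (koszulEnd C.dk
        (fun i => Module.toModuleEnd k (S := GroupRing p n k) C.X (groupRingY p k i)) ^ s)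
        (TensorProduct.comm k C.X (PolyA n k) t) := by
  induction s generalizing t with
  | zero => simp
  | succ s ih => rw [pow_succ, pow_succ, Module.End.mul_apply, Module.End.mul_apply, ih, comm_betaD]

theorem stmt_14 (p n : ℕ) (hp : p.Prime) (k : Type) [Field k] [CharP k p]
    (C : KGCx p n k p)
    -- `C` is free and finitely generated over `k[G]`:
    (hfree : C.IsPerfect) :
    -- `dim_k ₛH(β(C)) < ∞`: the homology `ker d^s / im d^{p-s}` is finite-dimensional, i.e.
    -- finitely many cycles generate it:
    ∀ s : ℕ, 1 ≤ s → s ≤ p - 1 →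
      ∃ (m : ℕ) (g : Fin m → (C.X ⊗[k] PolyA n k)),
        (∀ j, g j ∈ LinearMap.ker (betaD C ^ s)) ∧
        LinearMap.ker (betaD C ^ s) ≤
          LinearMap.range (betaD C ^ (p - s)) ⊔ Submodule.span k (Set.range g) := by
  intro s _ hs
  have hk : (p : k) = 0 := CharP.cast_eq_zero k p
  have := Fact.mk hp
  obtain ⟨ι, _, deg, b, hb⟩ := hfree
  have : Module.Finite k (GroupRing p n k) :=
    Module.Finite.of_basis (AddMonoidAlgebra.basis (Fin n → ZMod p) k)
  have : Module.Finite (GroupRing p n k) C.X := Module.Finite.of_basis b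
  have : Module.Finite k C.X := Module.Finite.trans (GroupRing p n k) C.X
  let Y : Fin n → Module.End k C.X := fun i =>
    Module.toModuleEnd k (S := GroupRing p n k) C.X (groupRingY p k i)
  let B : ℤ := ∑ a, |deg a|
  have hB : ∀ a, |deg a| ≤ B := fun a =>
    Finset.single_le_sum (f := fun a => |deg a|) (fun _ _ => abs_nonneg _) (Finset.mem_univ a)
  let F' : ℕ → Submodule (GroupRing p n k) C.X := fun j =>
    Submodule.span _ (b '' {a | deg a ≤ B - j})
  let F : ℕ → Submodule k C.X := fun j => (F' j).restrictScalars k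
  have hdF : C.dk ∈ shiftEnd F 1 := by
    intro j x hx
    change C.d x ∈ F' (j + 1)
    refine (Submodule.map_le_iff_le_comap.1 ?_ : F' j ≤ (F' (j + 1)).comap C.d) hx
    rw [Submodule.map_span_le]
    rintro _ ⟨a, ha, rfl⟩
    refine Submodule.span_mono (Set.image_mono ?_)
      (C.internal.le_span_basis b hb _ (C.d_deg _ _ (hb a)))
    intro a' ha'
    simp only [Set.mem_ofPred_eq] at ha ha' ⊢
    push_cast
    omega
  have hδ : ∀ i j x, coordinatewise b (groupRingDeriv i) (Y j x) =
      Y j (coordinatewise b (groupRingDeriv i) x) +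
        (if i = j then (1 : GroupRing p n k) else 0) • x :=
    fun i j x => coordinatewise_smul b _
      (fun c => by rw [groupRingDeriv_mul, ite_mul, one_mul, zero_mul]) x
  obtain ⟨m, g, hg, hle⟩ := exists_finite_span_ker_koszulEnd hp hk C.dk Y
    (fun i => coordinatewise b (groupRingDeriv i)) (F := F) (N := (2 * B + 1).toNat)
    (by
      ext x
      have h := LinearMap.congr_fun C.d_pow x
      rw [Module.End.pow_apply] at h ⊢
      exact h)
    (fun i => by rw [← map_pow, groupRingY_pow_prime hp hk, map_zero])
    (fun i => LinearMap.ext fun x => (C.d.map_smul _ x).symm)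
    (fun i j => (Commute.all _ _).map _)
    (fun i => LinearMap.ext fun x => by simp [hδ])
    (fun i j hij => LinearMap.ext fun x => by simp [hδ, hij])
    (by
      have huniv : {a | deg a ≤ B - (0 : ℕ)} = Set.univ := by
        ext a
        simpa using (le_abs_self _).trans (hB a)
      simp only [F, F', huniv, Set.image_univ, b.span_eq, Submodule.restrictScalars_top])
    (by
      have hempty : {a | deg a ≤ B - ((2 * B + 1).toNat : ℕ)} = ∅ := by
        ext a
        have h1 := neg_abs_le (deg a)
        have h2 := hB a
        simp only [Set.mem_ofPred_eq, Set.mem_empty_iff_false, iff_false, not_le]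
        omega
      simp only [F, F', hempty, Set.image_empty, Submodule.span_empty,
        Submodule.restrictScalars_bot])
    (fun j => Submodule.span_mono (Set.image_mono fun a ha => by
      simp only [Set.mem_ofPred_eq] at ha ⊢
      push_cast at ha
      omega))
    hdF (fun i j x hx => (F' j).smul_mem _ hx)
    (fun i j x hx => coordinatewise_mem_span b _ _ hx) (hs.trans (Nat.sub_le p 1))
  let e := TensorProduct.comm k C.X (PolyA n k)
  refine ⟨m, fun j => e.symm (g j), fun j => ?_, fun t ht => ?_⟩
  · rw [LinearMap.mem_ker, ← e.map_eq_zero_iff, comm_betaD_pow, e.apply_symm_apply]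
    exact hg j
  · have het : e t ∈ (LinearMap.ker (koszulEnd C.dk Y ^ s)).restrictScalars k := by
      rw [Submodule.restrictScalars_mem, LinearMap.mem_ker, ← comm_betaD_pow,
        LinearMap.mem_ker.1 ht, map_zero]
    obtain ⟨_, ⟨u, rfl⟩, v, hv, huv⟩ := Submodule.mem_sup.1 (hle het)
    refine Submodule.mem_sup.2 ⟨_, ⟨e.symm u, rfl⟩, e.symm v, ?_, e.injective ?_⟩
    · have := Submodule.mem_map_of_mem (f := e.symm.toLinearMap) hv
      rwa [Submodule.map_span, ← Set.range_comp] at this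
    · rw [map_add, comm_betaD_pow, e.apply_symm_apply, e.apply_symm_apply]
      exact huv
end

section
/- Let p be a prime, k a field of characteristic p, and A = k[x_1,…,x_n] graded by deg(x_i) = −1. Let M be a free p-DG A-module such that M_n = 0 for all sufficiently large n. If {}_sH_•(M⊗_A k) = 0 for some 1 ≤ s ≤ p−1, then M is contractible, i.e. the zero map M → 0 is a homotopy equivalence of p-DG A-modules (equivalently, the identity of M is homotopic to 0). -/
/-- A `p`-DG module over `A = k[x_1,…,x_n]` with `deg x_i = -1`: a graded `A`-module together
with an `A`-linear differential of degree `-1` satisfying `d ^ p = 0`. -/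
structure PDG (p n : ℕ) (k : Type) [Field k] : Type 1 where
  X : Type
  [acg : AddCommGroup X]
  [modA : Module (PolyA n k) X]
  [modk : Module k X]
  [tower : IsScalarTower k (PolyA n k) X]
  d : X →ₗ[PolyA n k] X
  gr : ℤ → Submodule k X
  internal : DirectSum.IsInternal gr
  x_deg : ∀ (i : Fin n) (m : ℤ), ∀ x ∈ gr m, (MvPolynomial.X i : PolyA n k) • x ∈ gr (m - 1)
  d_deg : ∀ m : ℤ, ∀ x ∈ gr m, d x ∈ gr (m - 1)
  d_pow : d ^ p = 0

attribute [instance] PDG.acg PDG.modA PDG.modk PDG.tower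

namespace PDG
variable {p n : ℕ} {k : Type} [Field k] (M : PDG p n k)

/-- `M` is free as a graded `A`-module: it has a homogeneous `A`-basis. -/
def IsFree : Prop :=
  ∃ (ι : Type) (deg : ι → ℤ) (b : Module.Basis ι (PolyA n k) M.X), ∀ a, b a ∈ M.gr (deg a)

/-- `M` is free and finitely generated as a graded `A`-module. -/
def IsFreeFG : Prop :=
  ∃ (ι : Type) (_ : Fintype ι) (deg : ι → ℤ) (b : Module.Basis ι (PolyA n k) M.X),
    ∀ a, b a ∈ M.gr (deg a)

/-- The submodule `(x_1,…,x_n)·M`, i.e. the kernel of `M → M ⊗_A k`. -/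
noncomputable def IM : Submodule (PolyA n k) M.X :=
  (Ideal.span (Set.range (MvPolynomial.X : Fin n → PolyA n k))) • (⊤ : Submodule (PolyA n k) M.X)

/-- The differential as a `k`-linear map. -/
noncomputable def dk : M.X →ₗ[k] M.X := M.d.restrictScalars k

/-- `(x_1,…,x_n)·M` as a `k`-subspace. -/
noncomputable def IMk : Submodule k M.X := M.IM.restrictScalars k

/-- The total homology `ₛH(M) = ker d^s / im d^{p-s}` as a `k`-vector space. -/
noncomputable abbrev H (s : ℕ) : Type :=
  ↥(LinearMap.ker (M.dk ^ s)) ⧸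
    (LinearMap.range (M.dk ^ (p - s))).comap (LinearMap.ker (M.dk ^ s)).subtype

/-- The total homology `ₛH(M ⊗_A k)` as a `k`-vector space, presented as the subquotient
`ker(d̄^s) / im(d̄^{p-s})` of `M/IM` pulled back to `M`. -/
noncomputable abbrev HBar (s : ℕ) : Type :=
  ↥(Submodule.comap (M.dk ^ s) M.IMk) ⧸
    (LinearMap.range (M.dk ^ (p - s)) ⊔ M.IMk).comap (Submodule.comap (M.dk ^ s) M.IMk).subtype

/-- `ₛH(M ⊗_A k) ≠ 0`. -/
def HBarNonzero (s : ℕ) : Prop :=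
  ∃ x : M.X, (M.dk ^ s) x ∈ M.IMk ∧ x ∉ LinearMap.range (M.dk ^ (p - s)) ⊔ M.IMk

end PDG

/-- In a ring, if `d ^ p = 0` then `∑ d ^ (p - 1 - i) * h * d ^ i` commutes with `d`. -/
theorem commute_sum_pow_mul_mul_pow {R : Type*} [Ring R] {p : ℕ} {d : R} (hd : d ^ p = 0)
    (h : R) : Commute d (∑ i ∈ Finset.range p, d ^ (p - 1 - i) * (h * d ^ i)) := by
  rw [Commute, SemiconjBy, ← sub_eq_zero, Finset.mul_sum, Finset.sum_mul,
    ← Finset.sum_sub_distrib]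
  have key : ∀ i ∈ Finset.range p,
      d * (d ^ (p - 1 - i) * (h * d ^ i)) - d ^ (p - 1 - i) * (h * d ^ i) * d
        = d ^ (p - i) * (h * d ^ i) - d ^ (p - (i + 1)) * (h * d ^ (i + 1)) := by
    intro i hi
    have hi' := Finset.mem_range.1 hi
    rw [show p - i = (p - 1 - i) + 1 by omega, show p - (i + 1) = p - 1 - i by omega,
      pow_succ' d (p - 1 - i), pow_succ d i]
    simp only [mul_assoc]
  rw [Finset.sum_congr rfl key, Finset.sum_range_sub' (fun i => d ^ (p - i) * (h * d ^ i))]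
  simp [hd]

/-- If `N` is locally nilpotent, then `1 - N` is bijective. -/
theorem bijective_one_sub_of_locally_nilpotent {R X : Type*} [Ring R] [AddCommGroup X]
    [Module R X] (N : Module.End R X) (hN : ∀ x, ∃ r, (N ^ r) x = 0) :
    Function.Bijective (1 - N : Module.End R X) := by
  constructor
  · rw [injective_iff_map_eq_zero]
    intro x hx
    have hfix : N x = x := (sub_eq_zero.1 hx).symm
    obtain ⟨r, hr⟩ := hN x
    have hpow : ∀ j, (N ^ j) x = x := by
      intro j
      induction j with
      | zero => rfl
      | succ j ih => rw [pow_succ, Module.End.mul_apply, hfix, ih]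
    rw [← hpow r, hr]
  · intro x
    obtain ⟨r, hr⟩ := hN x
    refine ⟨(∑ j ∈ Finset.range r, N ^ j) x, ?_⟩
    rw [← Module.End.mul_apply, mul_neg_geom_sum]
    simp [hr]

namespace PDG
variable {p n : ℕ} {k : Type} [Field k] (M : PDG p n k)

/-- The `k`-linear projection of `M` onto its component of degree `m`. -/
noncomputable def proj (m : ℤ) : M.X →ₗ[k] M.X :=
  letI := M.internal.chooseDecomposition
  (M.gr m).subtype ∘ₗ DirectSum.component k ℤ (fun i => M.gr i) m ∘ₗ
    (DirectSum.decomposeLinearEquiv M.gr).toLinearMap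

theorem proj_mem (m : ℤ) (x : M.X) : M.proj m x ∈ M.gr m := by
  simp [proj]

theorem proj_of_mem {m : ℤ} {x : M.X} (hx : x ∈ M.gr m) : M.proj m x = x := by
  let := M.internal.chooseDecomposition
  exact DirectSum.decompose_of_mem_same M.gr hx

theorem proj_of_mem_ne {m m' : ℤ} {x : M.X} (hx : x ∈ M.gr m) (h : m ≠ m') :
    M.proj m' x = 0 := by
  let := M.internal.chooseDecomposition
  exact DirectSum.decompose_of_mem_ne M.gr hx h

theorem induction_on_proj {P : M.X → Prop} (x : M.X) (zero : P 0)
    (add : ∀ y z, P y → P z → P (y + z)) (proj : ∀ m, P (M.proj m x)) : P x := by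
  classical
  let := M.internal.chooseDecomposition
  rw [← DirectSum.sum_support_decompose M.gr x]
  exact Finset.sum_induction _ P add zero fun m _ => proj m

/-- A homogeneous additive map commutes with the projections, up to the degree shift. -/
theorem proj_map_of_homogeneous (f : M.X →+ M.X) (c : ℤ)
    (hf : ∀ m, ∀ x ∈ M.gr m, f x ∈ M.gr (m + c)) (m : ℤ) (x : M.X) :
    M.proj (m + c) (f x) = f (M.proj m x) := by
  have key : ∀ l, ∀ y ∈ M.gr l, M.proj (m + c) (f y) = f (M.proj m y) := by
    intro l y hy
    by_cases hl : l = m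
    · subst hl
      rw [M.proj_of_mem (hf _ _ hy), M.proj_of_mem hy]
    · rw [M.proj_of_mem_ne (hf _ _ hy) (by omega), M.proj_of_mem_ne hy hl, map_zero]
  refine M.induction_on_proj (P := fun y => M.proj (m + c) (f y) = f (M.proj m y)) x (by simp)
    (fun y z hy hz => ?_) fun l => key l _ (M.proj_mem l x)
  simp only [map_add, hy, hz]

theorem proj_X_smul (i : Fin n) (m : ℤ) (x : M.X) :
    M.proj m ((MvPolynomial.X i : PolyA n k) • x)
      = (MvPolynomial.X i : PolyA n k) • M.proj (m + 1) x := by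
  have := M.proj_map_of_homogeneous
    (DistribSMul.toAddMonoidHom M.X (MvPolynomial.X i : PolyA n k)) (-1)
    (fun m x hx => M.x_deg i m x hx) (m + 1) x
  simpa using this

theorem d_pow_mem_gr (j : ℕ) {m : ℤ} {x : M.X} (hx : x ∈ M.gr m) :
    (M.d ^ j) x ∈ M.gr (m - j) := by
  induction j with
  | zero => simpa using hx
  | succ j ih =>
    rw [pow_succ', Module.End.mul_apply]
    have := M.d_deg _ _ ih
    rwa [show m - ((j + 1 : ℕ) : ℤ) = m - j - 1 by push_cast; ring]

theorem proj_d_pow (j : ℕ) (m : ℤ) (x : M.X) :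
    M.proj m ((M.d ^ j) x) = (M.d ^ j) (M.proj (m + j) x) := by
  have := M.proj_map_of_homogeneous (M.d ^ j).toAddMonoidHom (-j)
    (fun m x hx => M.d_pow_mem_gr j hx) (m + j) x
  simpa using this

theorem dk_pow_apply (j : ℕ) (x : M.X) : (M.dk ^ j) x = (M.d ^ j) x := by
  induction j generalizing x with
  | zero => rfl
  | succ j ih => rw [pow_succ, pow_succ, Module.End.mul_apply, Module.End.mul_apply, ih]; rfl

theorem X_smul_mem_IM (i : Fin n) (x : M.X) : (MvPolynomial.X i : PolyA n k) • x ∈ M.IM :=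
  Submodule.smul_mem_smul (Ideal.subset_span ⟨i, rfl⟩) trivial

theorem IM_induction {P : M.X → Prop} (zero : P 0) (add : ∀ y z, P y → P z → P (y + z))
    (smul : ∀ i y, P ((MvPolynomial.X i : PolyA n k) • y)) {x : M.X} (hx : x ∈ M.IM) : P x := by
  refine Submodule.smul_induction_on hx (fun r hr y _ => ?_) add
  clear * - hr zero add smul
  induction hr using Submodule.span_induction generalizing y with
  | mem r hr => obtain ⟨i, rfl⟩ := hr; exact smul i y
  | zero => rwa [zero_smul]
  | add r r' _ _ h h' => rw [add_smul]; exact add _ _ (h y) (h' y)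
  | smul a r _ h => rw [smul_eq_mul, mul_comm, mul_smul]; exact h (a • y)

theorem proj_mem_IM (m : ℤ) {x : M.X} (hx : x ∈ M.IM) : M.proj m x ∈ M.IM := by
  refine M.IM_induction (P := fun x => M.proj m x ∈ M.IM) (by simp) (fun y z hy hz => ?_)
    (fun i y => ?_) hx
  · simpa only [map_add] using add_mem hy hz
  · rw [proj_X_smul]; exact M.X_smul_mem_IM i _

theorem map_mem_IM (f : Module.End (PolyA n k) M.X) {x : M.X} (hx : x ∈ M.IM) : f x ∈ M.IM := by
  refine M.IM_induction (P := fun x => f x ∈ M.IM) (by simp) (fun y z hy hz => ?_)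
    (fun i y => ?_) hx
  · simpa only [map_add] using add_mem hy hz
  · rw [map_smul]; exact M.X_smul_mem_IM i _

/-- A property that is stable under addition, scalars of `k` and multiplication by the variables
holds everywhere as soon as it holds on a basis. -/
theorem basis_induction {ι : Type} (b : Module.Basis ι (PolyA n k) M.X) {P : M.X → Prop}
    (basis : ∀ a, P (b a)) (zero : P 0) (add : ∀ y z, P y → P z → P (y + z))
    (smul : ∀ (c : k) y, P y → P (c • y))
    (X_smul : ∀ i y, P y → P ((MvPolynomial.X i : PolyA n k) • y)) (x : M.X) : P x := by
  have hx : x ∈ Submodule.span (PolyA n k) (Set.range b) := by simp [b.span_eq]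
  induction hx using Submodule.span_induction with
  | mem x hx => obtain ⟨a, rfl⟩ := hx; exact basis a
  | zero => exact zero
  | add y z _ _ hy hz => exact add y z hy hz
  | smul q y _ hy =>
    induction q using MvPolynomial.induction_on with
    | C c =>
      rw [← MvPolynomial.algebraMap_eq, algebraMap_smul]
      exact smul c y hy
    | add q r hq hr => rw [add_smul]; exact add _ _ hq hr
    | mul_X q i hq => rw [mul_comm, mul_smul]; exact X_smul i _ hq

/-- An `A`-linear map that shifts the degrees of a homogeneous basis by `c` is homogeneous of
degree `c`. -/
theorem homogeneous_of_basis {ι : Type} {deg : ι → ℤ} (b : Module.Basis ι (PolyA n k) M.X)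
    (hb : ∀ a, b a ∈ M.gr (deg a)) (f : Module.End (PolyA n k) M.X) (c : ℤ)
    (hf : ∀ a, f (b a) ∈ M.gr (deg a + c)) (m : ℤ) (x : M.X) (hx : x ∈ M.gr m) :
    f x ∈ M.gr (m + c) := by
  have key : ∀ x, ∀ m, M.proj (m + c) (f x) = f (M.proj m x) := by
    intro x
    induction x using M.basis_induction b with
    | basis a =>
      intro m
      by_cases h : deg a = m
      · subst h; rw [M.proj_of_mem (hf a), M.proj_of_mem (hb a)]
      · rw [M.proj_of_mem_ne (hf a) (by omega), M.proj_of_mem_ne (hb a) h, map_zero]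
    | zero => simp
    | add y z hy hz => intro m; simp only [map_add, hy, hz]
    | smul r y hy =>
      intro m
      rw [LinearMap.map_smul_of_tower, map_smul, map_smul, LinearMap.map_smul_of_tower, hy]
    | X_smul i y hy =>
      intro m
      rw [map_smul, proj_X_smul, proj_X_smul, map_smul, ← hy, add_right_comm]
  rw [← M.proj_of_mem hx, ← key]
  exact M.proj_mem _ _

/-- The component of degree `c` of a `k`-linear endomorphism. -/
theorem exists_homogeneous_component (g : M.X →ₗ[k] M.X) (c : ℤ) :
    ∃ g' : M.X →ₗ[k] M.X, ∀ m, ∀ x ∈ M.gr m, g' x = M.proj (m + c) (g x) := by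
  let := M.internal.chooseDecomposition
  refine ⟨DirectSum.toModule k ℤ M.X (fun m => M.proj (m + c) ∘ₗ g ∘ₗ (M.gr m).subtype) ∘ₗ
    (DirectSum.decomposeLinearEquiv M.gr).toLinearMap, fun m x hx => ?_⟩
  lift x to M.gr m using hx
  simp only [LinearMap.comp_apply, LinearEquiv.coe_coe, DirectSum.decomposeLinearEquiv_apply,
    DirectSum.decompose_coe]
  rw [← DirectSum.lof_eq_of k, DirectSum.toModule_lof]
  rfl

/-- Vanishing of `ₛH(M ⊗ k)` for one `s` yields `ker d = im d ^ (p - 1)` modulo `(x)M`. -/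
theorem exists_sub_d_pow_mem_IM {s : ℕ} (hs1 : 1 ≤ s) (hs2 : s ≤ p - 1)
    (hH : ∀ x : M.X, (M.d ^ s) x ∈ M.IM → ∃ u, x - (M.d ^ (p - s)) u ∈ M.IM)
    {x : M.X} (hx : M.d x ∈ M.IM) : ∃ z, x - (M.d ^ (p - 1)) z ∈ M.IM := by
  have key : ∀ N j : ℕ, p - 1 - j ≤ N → (∃ y, x - (M.d ^ j) y ∈ M.IM) →
      ∃ z, x - (M.d ^ (p - 1)) z ∈ M.IM := by
    intro N
    induction N with
    | zero =>
      rintro j hj ⟨y, hy⟩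
      obtain ⟨r, rfl⟩ := Nat.exists_eq_add_of_le (show p - 1 ≤ j by omega)
      exact ⟨(M.d ^ r) y, by rwa [← Module.End.mul_apply, ← pow_add]⟩
    | succ N ih =>
      rintro j hj ⟨y, hy⟩
      have hdy : (M.d ^ (j + 1)) y ∈ M.IM := by
        have h := sub_mem hx (M.map_mem_IM M.d hy)
        rwa [map_sub, sub_sub_cancel, ← Module.End.mul_apply, ← pow_succ'] at h
      by_cases hjs : s ≤ j + 1
      · obtain ⟨u, hu⟩ := hH ((M.d ^ (j + 1 - s)) y) (by
          rwa [← Module.End.mul_apply, ← pow_add, Nat.add_sub_cancel' hjs])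
        refine ⟨u, ?_⟩
        have h := add_mem hy (M.map_mem_IM (M.d ^ (s - 1)) hu)
        rwa [map_sub, ← Module.End.mul_apply, ← Module.End.mul_apply, ← pow_add, ← pow_add,
          show s - 1 + (j + 1 - s) = j by omega, show s - 1 + (p - s) = p - 1 by omega,
          sub_add_sub_cancel] at h
      · obtain ⟨u, hu⟩ := hH y (by
          have h := M.map_mem_IM (M.d ^ (s - (j + 1))) hdy
          rwa [← Module.End.mul_apply, ← pow_add, Nat.sub_add_cancel (by omega)] at h)
        refine ih (j + (p - s)) (by omega) ⟨u, ?_⟩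
        have h := add_mem hy (M.map_mem_IM (M.d ^ j) hu)
        rwa [map_sub, ← Module.End.mul_apply, ← pow_add, sub_add_sub_cancel] at h
  exact key (p - 1) 0 (by omega) ⟨x, by simp⟩

/-- A `k`-linear section of `d ^ (p - 1)` on the kernel of `d`, everything modulo `(x)M`. -/
theorem exists_section_mod_IM
    (hexact : ∀ x : M.X, M.d x ∈ M.IM → ∃ z, x - (M.d ^ (p - 1)) z ∈ M.IM) :
    ∃ g : M.X →ₗ[k] M.X, (∀ x ∈ M.IM, g x = 0) ∧
      ∀ x, M.d x ∈ M.IM → (M.d ^ (p - 1)) (g x) - x ∈ M.IM := by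
  let D : M.X →ₗ[k] M.X ⧸ M.IMk := M.IMk.mkQ ∘ₗ (M.d ^ (p - 1)).restrictScalars k
  obtain ⟨t, ht⟩ := D.rangeRestrict.exists_rightInverse_of_surjective D.range_rangeRestrict
  obtain ⟨t', ht'⟩ := LinearMap.exists_extend t
  refine ⟨t' ∘ₗ M.IMk.mkQ, fun x hx => ?_, fun x hx => ?_⟩
  · have : M.IMk.mkQ x = 0 := (Submodule.Quotient.mk_eq_zero _).2 hx
    simp [this]
  · obtain ⟨z, hz⟩ := hexact x hx
    have hz' : D z = M.IMk.mkQ x := ((Submodule.Quotient.eq M.IMk).2 hz).symm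
    have h1 : t' (D z) = t ⟨D z, z, rfl⟩ := LinearMap.congr_fun ht' ⟨D z, z, rfl⟩
    have h2 : D (t ⟨D z, z, rfl⟩) = D z :=
      congrArg Subtype.val (LinearMap.congr_fun ht ⟨D z, z, rfl⟩)
    refine (Submodule.Quotient.eq M.IMk).1 ?_
    change D (t' (M.IMk.mkQ x)) = M.IMk.mkQ x
    rw [← hz', h1, h2]

/-- The homogeneous `A`-linear version of `exists_section_mod_IM`. -/
theorem exists_homogeneous_section_mod_IM (hfree : M.IsFree)
    (hexact : ∀ x : M.X, M.d x ∈ M.IM → ∃ z, x - (M.d ^ (p - 1)) z ∈ M.IM) :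
    ∃ h : Module.End (PolyA n k) M.X, (∀ m, ∀ x ∈ M.gr m, h x ∈ M.gr (m + (p - 1 : ℕ))) ∧
      ∀ x, M.d x ∈ M.IM → (M.d ^ (p - 1)) (h x) - x ∈ M.IM := by
  obtain ⟨g, hgI, hg⟩ := M.exists_section_mod_IM hexact
  obtain ⟨g', hg'⟩ := M.exists_homogeneous_component g (p - 1 : ℕ)
  obtain ⟨ι, deg, b, hb⟩ := hfree
  have hg'I : ∀ x ∈ M.IM, g' x = 0 := by
    intro x hx
    refine M.induction_on_proj (P := fun x => g' x = 0) x (by simp)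
      (fun y z hy hz => by rw [map_add, hy, hz, add_zero]) fun m => ?_
    rw [hg' m _ (M.proj_mem m x), hgI _ (M.proj_mem_IM m hx), map_zero]
  have hg'd : ∀ x, M.d x ∈ M.IM → (M.d ^ (p - 1)) (g' x) - x ∈ M.IM := by
    intro x hx
    refine M.induction_on_proj (P := fun x => (M.d ^ (p - 1)) (g' x) - x ∈ M.IM) x (by simp)
      (fun y z hy hz => ?_) fun m => ?_
    · simpa only [map_add, add_sub_add_comm] using add_mem hy hz
    · have hm := M.proj_mem m x
      have hd : M.d (M.proj m x) ∈ M.IM := by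
        have h := M.proj_d_pow 1 (m - 1) x
        rw [pow_one, Nat.cast_one, sub_add_cancel] at h
        rw [← h]
        exact M.proj_mem_IM _ hx
      have h := M.proj_mem_IM m (hg _ hd)
      rwa [map_sub, proj_d_pow, ← hg' m _ hm, M.proj_of_mem hm] at h
  let h : Module.End (PolyA n k) M.X := b.constr ℕ fun a => g' (b a)
  have hhb : ∀ a, h (b a) = g' (b a) := fun a => b.constr_basis ℕ _ a
  have hhg : ∀ x, h x - g' x ∈ M.IM := by
    intro x
    induction x using M.basis_induction b with
    | basis a => simp [hhb]
    | zero => simp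
    | add y z hy hz => simpa only [map_add, add_sub_add_comm] using add_mem hy hz
    | smul r y hy =>
      rw [LinearMap.map_smul_of_tower h, map_smul, ← smul_sub]
      exact M.IMk.smul_mem r hy
    | X_smul i y _ =>
      rw [hg'I _ (M.X_smul_mem_IM i y), sub_zero, map_smul]
      exact M.X_smul_mem_IM i _
  refine ⟨h, M.homogeneous_of_basis b hb h _ fun a => ?_, fun x hx => ?_⟩
  · rw [hhb, hg' _ _ (hb a)]
    exact M.proj_mem _ _
  · have := add_mem (M.map_mem_IM (M.d ^ (p - 1)) (hhg x)) (hg'd x hx)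
    rwa [map_sub, sub_add_sub_cancel] at this

/-- Graded Nakayama: a homogeneous endomorphism of degree `0` with a power mapping `M` into
`(x)M` is locally nilpotent if `M` is bounded above. -/
theorem locally_nilpotent_of_pow_mem_IM (hbdd : ∃ n₀ : ℤ, ∀ m : ℤ, n₀ ≤ m → M.gr m = ⊥)
    (N : Module.End (PolyA n k) M.X) (hN : ∀ m, ∀ x ∈ M.gr m, N x ∈ M.gr m) (q : ℕ)
    (hq : ∀ x, (N ^ q) x ∈ M.IM) (x : M.X) : ∃ r, (N ^ r) x = 0 := by
  obtain ⟨n₀, hn₀⟩ := hbdd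
  have hNpow : ∀ j m, ∀ x ∈ M.gr m, (N ^ j) x ∈ M.gr m := by
    intro j m x hx
    induction j with
    | zero => exact hx
    | succ j ih => rw [pow_succ', Module.End.mul_apply]; exact hN _ _ ih
  have key : ∀ (j : ℕ) (m : ℤ), n₀ ≤ m + j → ∀ x ∈ M.gr m, (N ^ (q * j)) x = 0 := by
    intro j
    induction j with
    | zero =>
      intro m hm x hx
      rw [hn₀ m (by simpa using hm), Submodule.mem_bot] at hx
      simp [hx]
    | succ j ih =>
      intro m hm x hx
      have hI : ∀ z ∈ M.IM, (N ^ (q * j)) (M.proj m z) = 0 := by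
        intro z hz
        refine M.IM_induction (P := fun z => (N ^ (q * j)) (M.proj m z) = 0) (by simp)
          (fun y z hy hz => by simp only [map_add, hy, hz, add_zero]) (fun i y => ?_) hz
        rw [proj_X_smul, map_smul, ih (m + 1) (by push_cast at hm; omega) _ (M.proj_mem _ _),
          smul_zero]
      have h := hI _ (hq x)
      rwa [M.proj_of_mem (hNpow q m x hx), ← Module.End.mul_apply, ← pow_add, ← Nat.mul_succ] at h
  refine M.induction_on_proj (P := fun x => ∃ r, (N ^ r) x = 0) x ⟨0, by simp⟩ ?_ fun m =>
    ⟨q * (n₀ - m).toNat, key _ m (by omega) _ (M.proj_mem m x)⟩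
  rintro y z ⟨r, hr⟩ ⟨r', hr'⟩
  refine ⟨r + r', ?_⟩
  rw [map_add, pow_add, Module.End.mul_apply, Module.End.mul_apply, hr', map_zero, add_zero,
    ← Module.End.mul_apply, ← pow_add, add_comm r r', pow_add, Module.End.mul_apply, hr, map_zero]

/-- The homotopy sum `∑ d ^ (p - 1 - i) h d ^ i` preserves degrees if `h` has degree `p - 1`. -/
theorem homotopy_sum_mem_gr (h : Module.End (PolyA n k) M.X)
    (hh : ∀ m, ∀ x ∈ M.gr m, h x ∈ M.gr (m + (p - 1 : ℕ))) (m : ℤ) (x : M.X) (hx : x ∈ M.gr m) :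
    (∑ i ∈ Finset.range p, M.d ^ (p - 1 - i) * (h * M.d ^ i)) x ∈ M.gr m := by
  rw [LinearMap.sum_apply]
  refine sum_mem fun i hi => ?_
  have hi' := Finset.mem_range.1 hi
  have := M.d_pow_mem_gr (p - 1 - i) (hh _ _ (M.d_pow_mem_gr i hx))
  rwa [show m - i + (p - 1 : ℕ) - (p - 1 - i : ℕ) = m by omega] at this

end PDG

theorem stmt_16 (p n : ℕ) (hp : p.Prime) (k : Type) [Field k] [CharP k p]
    (M : PDG p n k) (hfree : M.IsFree)
    (hbdd : ∃ n₀ : ℤ, ∀ m : ℤ, n₀ ≤ m → M.gr m = ⊥)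
    (s : ℕ) (hs1 : 1 ≤ s) (hs2 : s ≤ p - 1)
    (hH : ∀ x : M.X, (M.dk ^ s) x ∈ M.IMk →
      x ∈ LinearMap.range (M.dk ^ (p - s)) ⊔ M.IMk) :
    ∃ h : M.X →ₗ[PolyA n k] M.X,
      (∀ m : ℤ, ∀ x ∈ M.gr m, h x ∈ M.gr (m + p - 1)) ∧
      (LinearMap.id : M.X →ₗ[PolyA n k] M.X) =
        ∑ i ∈ Finset.range p, (M.d ^ (p - 1 - i)) ∘ₗ h ∘ₗ (M.d ^ i) := by
  have hp1 : 1 ≤ p := hp.one_le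
  have hH' : ∀ x : M.X, (M.d ^ s) x ∈ M.IM → ∃ u, x - (M.d ^ (p - s)) u ∈ M.IM := by
    intro x hx
    obtain ⟨_, ⟨u, rfl⟩, z, hz, rfl⟩ := Submodule.mem_sup.1
      (hH x (by rw [M.dk_pow_apply]; exact hx))
    exact ⟨u, by rw [M.dk_pow_apply, add_sub_cancel_left]; exact hz⟩
  obtain ⟨h, hdeg, hsec⟩ := M.exists_homogeneous_section_mod_IM hfree
    fun x hx => M.exists_sub_d_pow_mem_IM hs1 hs2 hH' hx
  set φ : Module.End (PolyA n k) M.X :=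
    ∑ i ∈ Finset.range p, M.d ^ (p - 1 - i) * (h * M.d ^ i) with hφ
  have hcomm : Commute M.d φ := commute_sum_pow_mul_mul_pow M.d_pow h
  have hφdeg := M.homotopy_sum_mem_gr h hdeg
  rw [← hφ] at hφdeg
  set N : Module.End (PolyA n k) M.X := 1 - φ with hN
  have hNdeg : ∀ m, ∀ x ∈ M.gr m, N x ∈ M.gr m := fun m x hx => sub_mem hx (hφdeg m x hx)
  have hNcomm : Commute M.d N := (Commute.one_right _).sub_right hcomm
  have hNker : ∀ y, M.d y ∈ M.IM → N y ∈ M.IM := by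
    intro y hy
    obtain ⟨q, rfl⟩ : ∃ q, p = q + 1 := ⟨p - 1, by omega⟩
    have h0 := hsec y hy
    rw [← neg_mem_iff, hN, LinearMap.sub_apply, neg_sub, hφ, Finset.sum_range_succ',
      LinearMap.add_apply, LinearMap.sum_apply, add_sub_assoc]
    refine add_mem (sum_mem fun i _ => ?_) (by simpa using h0)
    rw [pow_succ, ← mul_assoc, ← mul_assoc, Module.End.mul_apply]
    exact M.map_mem_IM _ hy
  have hNpow : ∀ j x, (M.d ^ j) x ∈ M.IM → (N ^ j) x ∈ M.IM := by
    intro j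
    induction j with
    | zero => exact fun x hx => hx
    | succ j ih =>
      intro x hx
      rw [pow_succ']
      refine hNker _ ?_
      rw [← Module.End.mul_apply, (hNcomm.pow_right j).eq]
      refine ih _ ?_
      rwa [← Module.End.mul_apply, ← pow_succ]
  have hnil := M.locally_nilpotent_of_pow_mem_IM hbdd N hNdeg p
    fun x => hNpow p x (by simp [M.d_pow])
  have hbij : Function.Bijective φ := by
    simpa [hN] using bijective_one_sub_of_locally_nilpotent N hnil
  let e := LinearEquiv.ofBijective φ hbij
  let ψ : Module.End (PolyA n k) M.X := e.symm.toLinearMap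
  have hψφ : ψ * φ = 1 := LinearMap.ext fun x => e.symm_apply_apply x
  have hφψ : φ * ψ = 1 := LinearMap.ext fun x => e.apply_symm_apply x
  have hψd : Commute M.d ψ := by
    have : ψ * (M.d * φ) * ψ = ψ * (φ * M.d) * ψ := by rw [hcomm.eq]
    rw [mul_assoc, mul_assoc, hφψ, mul_one, ← mul_assoc ψ φ, hψφ, one_mul] at this
    exact this.symm
  have hψdeg : ∀ m, ∀ x ∈ M.gr m, ψ x ∈ M.gr m := by
    intro m x hx
    obtain ⟨r, hr⟩ := hnil x
    have hgeom : φ ((∑ j ∈ Finset.range r, N ^ j) x) = x := by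
      rw [← Module.End.mul_apply, show φ = 1 - N by simp [hN], mul_neg_geom_sum]
      simp [hr]
    have hψx : ψ x = (∑ j ∈ Finset.range r, N ^ j) x := by
      conv_lhs => rw [← hgeom]
      exact e.symm_apply_apply _
    rw [hψx, LinearMap.sum_apply]
    refine sum_mem fun j hj => ?_
    clear hj
    induction j with
    | zero => exact hx
    | succ j ih => rw [pow_succ']; exact hNdeg _ _ ih
  refine ⟨ψ * h, fun m x hx => ?_, ?_⟩
  · have := hψdeg _ _ (hdeg m x hx)
    rwa [show m + ((p - 1 : ℕ) : ℤ) = m + p - 1 by omega] at this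
  · change 1 = ∑ i ∈ Finset.range p, M.d ^ (p - 1 - i) * (ψ * h * M.d ^ i)
    rw [← hψφ, hφ, Finset.mul_sum]
    refine Finset.sum_congr rfl fun i _ => ?_
    rw [← mul_assoc ψ, ← (hψd.pow_left (p - 1 - i)).eq]
    simp only [mul_assoc]
end

section
/- Let p be a prime, k a field of characteristic p, and A = k[x_1,…,x_n] graded by deg(x_i) = −1. For any free, finitely generated p-DG A-module M, there exist a free, finitely generated p-DG A-module M̃ and a homotopy equivalence f : M → M̃ of p-DG A-modules such that the differential of M̃⊗_A k is (p−1)-nilpotent, i.e. d^{p−1} = 0 on M̃⊗_A k. -/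
namespace PDG

open MvPolynomial

section Coefficients

variable {n : ℕ} {k : Type} [Field k]

/-- The homogeneous part of degree `z` of `A`, where every variable has degree `-1`. -/
noncomputable abbrev coeffGr (n : ℕ) (k : Type) [Field k] (z : ℤ) : Submodule k (PolyA n k) :=
  weightedHomogeneousSubmodule k (fun _ : Fin n => (-1 : ℤ)) z

theorem weight_neg_one (e : Fin n →₀ ℕ) :
    Finsupp.weight (fun _ : Fin n => (-1 : ℤ)) e = -(e.degree : ℤ) := by
  simp [Finsupp.weight_apply, Finsupp.sum, Finsupp.degree_apply]

theorem degree_eq_neg_of_coeff_ne_zero {z : ℤ} {c : PolyA n k} (hc : c ∈ coeffGr n k z)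
    {e : Fin n →₀ ℕ} (he : coeff e c ≠ 0) : (e.degree : ℤ) = -z := by
  have h : Finsupp.weight (fun _ : Fin n => (-1 : ℤ)) e = z := hc he
  rw [weight_neg_one] at h
  lia

theorem eq_zero_of_mem_coeffGr_of_pos {z : ℤ} {c : PolyA n k} (hc : c ∈ coeffGr n k z)
    (hz : 0 < z) : c = 0 := by
  ext e
  by_contra he
  have := degree_eq_neg_of_coeff_ne_zero hc he
  lia

theorem degree_eq_zero_of_constantCoeff_ne_zero {z : ℤ} {c : PolyA n k}
    (hc : c ∈ coeffGr n k z) (h : constantCoeff c ≠ 0) : z = 0 := by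
  have := degree_eq_neg_of_coeff_ne_zero hc (e := 0) h
  simpa using this.symm

theorem eq_C_of_constantCoeff_ne_zero {z : ℤ} {c : PolyA n k}
    (hc : c ∈ coeffGr n k z) (h : constantCoeff c ≠ 0) : c = C (constantCoeff c) := by
  obtain rfl := degree_eq_zero_of_constantCoeff_ne_zero hc h
  ext e
  by_cases he : e = 0
  · simp [he, constantCoeff_eq]
  · rw [coeff_C, if_neg (Ne.symm he)]
    by_contra hne
    have := degree_eq_neg_of_coeff_ne_zero hc hne
    exact he ((Finsupp.degree_eq_zero_iff e).1 (by simpa using this))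

theorem mem_span_X_of_constantCoeff_eq_zero {c : PolyA n k} (h : constantCoeff c = 0) :
    c ∈ Ideal.span (Set.range (MvPolynomial.X : Fin n → PolyA n k)) := by
  rw [← Set.image_univ, mem_ideal_span_X_image]
  intro e he
  by_contra! h0
  obtain rfl : e = 0 := by
    ext i
    exact h0 i (Set.mem_univ i)
  exact mem_support_iff.1 he h

end Coefficients

variable {p n : ℕ} {k : Type} [Field k]

section Grading

variable (M : PDG p n k)

theorem monomial_one_smul_mem (e : Fin n →₀ ℕ) :
    ∀ m : ℤ, ∀ x ∈ M.gr m, (monomial e 1 : PolyA n k) • x ∈ M.gr (m - e.degree) := by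
  induction e using Finsupp.induction_linear with
  | zero => intro m x hx; simpa using hx
  | add e f he hf =>
    intro m x hx
    have h := he _ _ (hf m x hx)
    rw [smul_smul, monomial_mul, one_mul] at h
    convert h using 2
    rw [map_add]; push_cast; ring
  | single i s =>
    intro m x hx
    induction s with
    | zero => simpa using hx
    | succ s ih =>
      have h := M.x_deg i _ _ ih
      rw [smul_smul, MvPolynomial.X, monomial_mul, one_mul, ← Finsupp.single_add, add_comm 1 s] at h
      convert h using 2
      simp [Finsupp.degree_single]; ring

theorem smul_mem_gr {z m : ℤ} {c : PolyA n k} (hc : c ∈ coeffGr n k z) {x : M.X}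
    (hx : x ∈ M.gr m) : c • x ∈ M.gr (m + z) := by
  rw [← support_sum_monomial_coeff c, Finset.sum_smul]
  refine Submodule.sum_mem _ fun e he => ?_
  have hz := degree_eq_neg_of_coeff_ne_zero hc (mem_support_iff.1 he)
  have h := (M.gr (m - e.degree)).smul_mem (coeff e c) (M.monomial_one_smul_mem e m x hx)
  rw [← smul_assoc, smul_monomial, smul_eq_mul, mul_one, hz, sub_neg_eq_add] at h
  exact h

theorem iSupIndep_gr : iSupIndep M.gr :=
  ((DirectSum.isInternal_submodule_iff_iSupIndep_and_iSup_eq_top _).1 M.internal).1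

theorem iSup_gr : iSup M.gr = ⊤ :=
  ((DirectSum.isInternal_submodule_iff_iSupIndep_and_iSup_eq_top _).1 M.internal).2

theorem d_pow_mem (s : ℕ) {m : ℤ} {x : M.X} (hx : x ∈ M.gr m) :
    (M.d ^ s) x ∈ M.gr (m - s) := by
  induction s with
  | zero => simpa using hx
  | succ s ih =>
    have h := M.d_deg _ _ ih
    rw [pow_succ', Module.End.mul_apply]
    convert h using 2
    push_cast; ring

/-- The coordinates of a homogeneous element in a homogeneous basis are homogeneous. -/
theorem repr_mem_coeffGr {ι : Type} {deg : ι → ℤ} (b : Module.Basis ι (PolyA n k) M.X)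
    (hb : ∀ a, b a ∈ M.gr (deg a)) {m : ℤ} {x : M.X} (hx : x ∈ M.gr m) (j : ι) :
    b.repr x j ∈ coeffGr n k (m - deg j) := by
  classical
  let G : ℤ → Submodule k M.X := fun m => ⨅ j,
    (coeffGr n k (m - deg j)).comap ((b.coord j).restrictScalars k)
  have memG : ∀ m x, x ∈ G m ↔ ∀ j, b.repr x j ∈ coeffGr n k (m - deg j) := by
    intro m x
    simp only [G, Submodule.mem_iInf, Submodule.mem_comap, LinearMap.restrictScalars_apply,
      Module.Basis.coord_apply]
  have hG : ∀ m, G m ≤ M.gr m := by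
    intro m x hx
    rw [memG] at hx
    rw [← b.linearCombination_repr x, Finsupp.linearCombination_apply]
    refine Submodule.sum_mem _ fun j _ => ?_
    simpa using M.smul_mem_gr (hx j) (hb j)
  have htop : ⨆ m, G m = ⊤ := by
    refine eq_top_iff.2 fun x _ => ?_
    rw [← b.linearCombination_repr x, Finsupp.linearCombination_apply]
    refine Submodule.sum_mem _ fun j _ => ?_
    induction b.repr x j using MvPolynomial.induction_on' with
    | monomial e a =>
      refine Submodule.mem_iSup_of_mem (deg j - e.degree) ((memG _ _).2 fun i => ?_)
      by_cases hij : j = i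
      · subst hij
        simpa using isWeightedHomogeneous_monomial _ e a
          ((weight_neg_one e).trans (by ring : _ = deg j - e.degree - deg j))
      · simp [hij]
    | add c c' h h' =>
      simpa only [add_smul] using Submodule.add_mem _ h h'
  have hx' : x ∈ G m ⊔ ⨆ z, ⨆ (_ : z ≠ m), G z := by
    rw [← iSup_split_single, htop]; trivial
  obtain ⟨u, hu, v, hv, rfl⟩ := Submodule.mem_sup.1 hx'
  have hv0 : v = 0 := by
    refine Submodule.disjoint_def.1 (M.iSupIndep_gr m) v ?_ ?_
    · simpa using Submodule.sub_mem _ hx (hG m hu)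
    · exact iSup₂_mono (fun z _ => hG z) hv
  subst hv0
  rw [add_zero]
  exact (memG m u).1 hu j

end Grading

section Exchange

/-- A submodule of `M` which is free on a finite homogeneous family of size `r`. -/
def HasHomogeneousBasis (M : PDG p n k) (W : Submodule (PolyA n k) M.X) (r : ℕ) : Prop :=
  ∃ (ι : Type) (_ : Fintype ι) (deg : ι → ℤ) (b : ι → M.X),
    Fintype.card ι = r ∧ LinearIndependent (PolyA n k) b ∧
      Submodule.span (PolyA n k) (Set.range b) = W ∧ ∀ a, b a ∈ M.gr (deg a)

/-- Cutting by a homogeneous functional that takes the value `1` removes one basis vector. -/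
theorem HasHomogeneousBasis.inf_ker {M : PDG p n k} {W : Submodule (PolyA n k) M.X} {r : ℕ}
    (hW : M.HasHomogeneousBasis W (r + 1)) (ρ : M.X →ₗ[PolyA n k] PolyA n k) (t : ℤ)
    (hρ : ∀ m : ℤ, ∀ x ∈ M.gr m, ρ x ∈ coeffGr n k (m + t)) {v : M.X} (hv : v ∈ W)
    (h1 : ρ v = 1) : M.HasHomogeneousBasis (W ⊓ LinearMap.ker ρ) r := by
  classical
  obtain ⟨ι, _, deg, b, hcard, hli, hspan, hb⟩ := hW
  obtain ⟨j, hj⟩ : ∃ j, constantCoeff (ρ (b j)) ≠ 0 := by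
    by_contra! hall
    have hle : W ≤ Submodule.comap ρ
        (RingHom.ker (constantCoeff (R := k) (σ := Fin n)) : Submodule (PolyA n k) (PolyA n k)) := by
      rw [← hspan, Submodule.span_le]
      rintro _ ⟨j, rfl⟩
      exact hall j
    have := hle hv
    rw [Submodule.mem_comap, h1, RingHom.mem_ker, map_one] at this
    exact one_ne_zero this
  set u : k := constantCoeff (ρ (b j))
  have hρj : ρ (b j) = C u := eq_C_of_constantCoeff_ne_zero (hρ _ _ (hb j)) hj
  have ht : deg j + t = 0 := degree_eq_zero_of_constantCoeff_ne_zero (hρ _ _ (hb j)) hj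
  let T : M.X →ₗ[PolyA n k] M.X := LinearMap.id - ρ.smulRight ((C u⁻¹ : PolyA n k) • b j)
  have hT : ∀ x, T x = x - ρ x • (C u⁻¹ : PolyA n k) • b j := fun x => rfl
  have hTj : T (b j) = 0 := by
    rw [hT, hρj, smul_smul, ← C_mul, mul_inv_cancel₀ hj, C_1, one_smul, sub_self]
  have hker : ∀ x, ρ (T x) = 0 := by
    intro x
    rw [hT, map_sub, map_smul, map_smul, hρj, smul_eq_mul, smul_eq_mul, ← C_mul,
      inv_mul_cancel₀ hj, C_1, mul_one, sub_self]
  have hjW : b j ∈ W := hspan ▸ Submodule.subset_span ⟨j, rfl⟩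
  have hTW : ∀ x ∈ W, T x ∈ W := fun x hx =>
    Submodule.sub_mem _ hx (Submodule.smul_mem _ _ (Submodule.smul_mem _ _ hjW))
  refine ⟨{i // i ≠ j}, inferInstance, fun i => deg i, fun i => T (b i), ?_, ?_, ?_, ?_⟩
  · rw [Fintype.card_subtype_compl, hcard]; simp
  · refine (hli.comp (fun i : {i // i ≠ j} => (i : ι)) Subtype.val_injective).map (f := T) ?_
    have hd := hli.disjoint_span_image (s := {i | i ≠ j}) (t := {j})
      (Set.disjoint_left.2 fun i hi hi' => hi hi')
    refine hd.mono (le_of_eq ?_) ?_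
    · rw [Set.range_comp, Subtype.range_coe_subtype]
    · intro x hx
      rw [LinearMap.mem_ker, hT, sub_eq_zero] at hx
      rw [hx, Set.image_singleton]
      exact Submodule.smul_mem _ _ (Submodule.smul_mem _ _ (Submodule.mem_span_singleton_self _))
  · apply le_antisymm
    · rw [Submodule.span_le]
      rintro _ ⟨i, rfl⟩
      exact ⟨hTW _ (hspan ▸ Submodule.subset_span ⟨i, rfl⟩), hker _⟩
    · rintro x ⟨hxW, hx⟩
      have hle : W ≤ (Submodule.span (PolyA n k)
          (Set.range fun i : {i // i ≠ j} => T (b i))).comap T := by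
        rw [← hspan, Submodule.span_le]
        rintro _ ⟨i, rfl⟩
        by_cases hij : i = j
        · subst hij
          simp [hTj]
        · exact Submodule.subset_span ⟨⟨i, hij⟩, rfl⟩
      have hTx : T x = x := by rw [hT, LinearMap.mem_ker.1 hx, zero_smul, sub_zero]
      simpa [hTx] using hle hxW
  · rintro ⟨i, hij⟩
    refine Submodule.sub_mem _ (hb i) ?_
    have h := M.smul_mem_gr (hρ _ _ (hb i))
      (M.smul_mem_gr (isWeightedHomogeneous_C _ u⁻¹) (hb j))
    rwa [show deg j + 0 + (deg i + t) = deg i by lia] at h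

end Exchange

section HomotopyEquivalence

/-- `M` and `N` are homotopy equivalent `p`-DG modules. -/
def HtpyEquiv (M N : PDG p n k) : Prop :=
  ∃ f : M.X →ₗ[PolyA n k] N.X,
    (∀ m : ℤ, ∀ x ∈ M.gr m, f x ∈ N.gr m) ∧ f ∘ₗ M.d = N.d ∘ₗ f ∧
    (∃ g : N.X →ₗ[PolyA n k] M.X,
      (∀ m : ℤ, ∀ y ∈ N.gr m, g y ∈ M.gr m) ∧ g ∘ₗ N.d = M.d ∘ₗ g ∧
      ∃ (h₁ : M.X →ₗ[PolyA n k] M.X) (h₂ : N.X →ₗ[PolyA n k] N.X),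
        (∀ m : ℤ, ∀ x ∈ M.gr m, h₁ x ∈ M.gr (m + p - 1)) ∧
        (∀ m : ℤ, ∀ y ∈ N.gr m, h₂ y ∈ N.gr (m + p - 1)) ∧
        g ∘ₗ f - LinearMap.id =
          ∑ i ∈ Finset.range p, (M.d ^ (p - 1 - i)) ∘ₗ h₁ ∘ₗ (M.d ^ i) ∧
        f ∘ₗ g - LinearMap.id =
          ∑ i ∈ Finset.range p, (N.d ^ (p - 1 - i)) ∘ₗ h₂ ∘ₗ (N.d ^ i))

theorem HtpyEquiv.refl (M : PDG p n k) : M.HtpyEquiv M :=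
  ⟨LinearMap.id, fun _ _ hx => hx, rfl, LinearMap.id, fun _ _ hx => hx, rfl, 0, 0,
    by simp, by simp, by simp, by simp⟩

theorem comp_d_pow {M N : PDG p n k} {f : M.X →ₗ[PolyA n k] N.X} (hf : f ∘ₗ M.d = N.d ∘ₗ f)
    (s : ℕ) (x : M.X) : f ((M.d ^ s) x) = (N.d ^ s) (f x) := by
  induction s with
  | zero => rfl
  | succ s ih =>
    rw [pow_succ', pow_succ', Module.End.mul_apply, Module.End.mul_apply, ← ih]
    exact LinearMap.congr_fun hf _

/-- Null-homotopies are stable under composition with morphisms on both sides. -/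
theorem conj_sub_id_eq_sum {M N : PDG p n k} {f : M.X →ₗ[PolyA n k] N.X}
    {g : N.X →ₗ[PolyA n k] M.X} (hf : f ∘ₗ M.d = N.d ∘ₗ f) (hg : g ∘ₗ N.d = M.d ∘ₗ g)
    {φ : N.X →ₗ[PolyA n k] N.X} {h : M.X →ₗ[PolyA n k] M.X} {h' : N.X →ₗ[PolyA n k] N.X}
    (hgf : g ∘ₗ f - LinearMap.id =
      ∑ i ∈ Finset.range p, (M.d ^ (p - 1 - i)) ∘ₗ h ∘ₗ (M.d ^ i))
    (hφ : φ - LinearMap.id =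
      ∑ i ∈ Finset.range p, (N.d ^ (p - 1 - i)) ∘ₗ h' ∘ₗ (N.d ^ i)) :
    g ∘ₗ φ ∘ₗ f - LinearMap.id =
      ∑ i ∈ Finset.range p, (M.d ^ (p - 1 - i)) ∘ₗ (h + g ∘ₗ h' ∘ₗ f) ∘ₗ (M.d ^ i) := by
  ext x
  have e₁ := LinearMap.congr_fun hgf x
  have e₂ := congrArg g (LinearMap.congr_fun hφ (f x))
  simp only [LinearMap.sub_apply, LinearMap.comp_apply, LinearMap.id_apply, LinearMap.sum_apply,
    map_sum, map_sub, comp_d_pow hg, LinearMap.add_apply, map_add, comp_d_pow hf,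
    Finset.sum_add_distrib] at e₁ e₂ ⊢
  rw [← e₁, ← e₂]
  abel

theorem HtpyEquiv.trans {M N P : PDG p n k} (hMN : M.HtpyEquiv N) (hNP : N.HtpyEquiv P) :
    M.HtpyEquiv P := by
  obtain ⟨f, fgr, fd, g, ggr, gd, h₁, h₂, h₁gr, h₂gr, e₁, e₂⟩ := hMN
  obtain ⟨f', fgr', fd', g', ggr', gd', h₁', h₂', h₁gr', h₂gr', e₁', e₂'⟩ := hNP
  refine ⟨f' ∘ₗ f, fun m x hx => fgr' m _ (fgr m x hx), ?_, g ∘ₗ g',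
    fun m x hx => ggr m _ (ggr' m x hx), ?_, h₁ + g ∘ₗ h₁' ∘ₗ f, h₂' + f' ∘ₗ h₂ ∘ₗ g', ?_, ?_,
    conj_sub_id_eq_sum fd gd e₁ e₁', conj_sub_id_eq_sum gd' fd' e₂' e₂⟩
  · rw [LinearMap.comp_assoc, fd, ← LinearMap.comp_assoc, fd', LinearMap.comp_assoc]
  · rw [LinearMap.comp_assoc, gd', ← LinearMap.comp_assoc, gd, LinearMap.comp_assoc]
  · exact fun m x hx => Submodule.add_mem _ (h₁gr m x hx) (ggr _ _ (h₁gr' m _ (fgr m x hx)))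
  · exact fun m x hx => Submodule.add_mem _ (h₂gr' m x hx) (fgr' _ _ (h₂gr m _ (ggr' m x hx)))

end HomotopyEquivalence

section Splitting

/-- The restriction of a `p`-DG structure to a stable submodule with a graded retraction. -/
noncomputable def restrict (M : PDG p n k) (W : Submodule (PolyA n k) M.X)
    (hW : ∀ x ∈ W, M.d x ∈ W) (r : M.X →ₗ[PolyA n k] W) (hr : ∀ x : W, r x = x)
    (hgr : ∀ m : ℤ, ∀ x ∈ M.gr m, (r x : M.X) ∈ M.gr m) : PDG p n k where
  X := W
  d := M.d.restrict hW
  gr m := (M.gr m).comap (W.subtype.restrictScalars k)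
  internal := by
    rw [DirectSum.isInternal_submodule_iff_iSupIndep_and_iSup_eq_top]
    constructor
    · intro m
      rw [Submodule.disjoint_def]
      intro x hx hx'
      refine Subtype.ext (Submodule.disjoint_def.1 (M.iSupIndep_gr m) x hx ?_)
      have hle : (⨆ z, ⨆ (_ : z ≠ m), (M.gr z).comap (W.subtype.restrictScalars k)) ≤
          (⨆ z, ⨆ (_ : z ≠ m), M.gr z).comap (W.subtype.restrictScalars k) :=
        iSup₂_le fun z hz => Submodule.comap_mono (le_iSup₂_of_le z hz le_rfl)
      exact hle hx'
    · refine eq_top_iff.2 fun x _ => ?_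
      have hle : iSup M.gr ≤ (⨆ z, (M.gr z).comap (W.subtype.restrictScalars k)).comap
          (r.restrictScalars k) :=
        iSup_le fun z y hy => Submodule.mem_iSup_of_mem z (hgr z y hy)
      have hx := hle (M.iSup_gr ▸ Submodule.mem_top : (x : M.X) ∈ iSup M.gr)
      rw [Submodule.mem_comap, LinearMap.restrictScalars_apply, hr] at hx
      exact hx
  x_deg i m x hx := M.x_deg i m x hx
  d_deg m x hx := M.d_deg m x hx
  d_pow := by
    rw [Module.End.pow_restrict]
    ext x
    simp [LinearMap.restrict_apply, M.d_pow]

/-- `M` is free on a homogeneous basis of size `r`. -/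
def HasRank (M : PDG p n k) (r : ℕ) : Prop :=
  ∃ (ι : Type) (_ : Fintype ι) (deg : ι → ℤ) (b : Module.Basis ι (PolyA n k) M.X),
    Fintype.card ι = r ∧ ∀ a, b a ∈ M.gr (deg a)

theorem HasRank.isFreeFG {M : PDG p n k} {r : ℕ} (h : M.HasRank r) : M.IsFreeFG := by
  obtain ⟨ι, hι, deg, b, -, hb⟩ := h
  exact ⟨ι, hι, deg, b, hb⟩

theorem HasRank.hasHomogeneousBasis {M : PDG p n k} {r : ℕ} (h : M.HasRank r) :
    M.HasHomogeneousBasis ⊤ r := by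
  obtain ⟨ι, hι, deg, b, hc, hb⟩ := h
  exact ⟨ι, hι, deg, b, hc, b.linearIndependent, b.span_eq, hb⟩

theorem HasHomogeneousBasis.hasRank_restrict {M : PDG p n k} {W : Submodule (PolyA n k) M.X}
    {s : ℕ} (h : M.HasHomogeneousBasis W s) (hW : ∀ x ∈ W, M.d x ∈ W)
    (r : M.X →ₗ[PolyA n k] W) (hr : ∀ x : W, r x = x)
    (hgr : ∀ m : ℤ, ∀ x ∈ M.gr m, (r x : M.X) ∈ M.gr m) :
    (M.restrict W hW r hr hgr).HasRank s := by
  obtain ⟨ι, hι, deg, b, hc, hli, rfl, hb⟩ := h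
  refine ⟨ι, hι, deg, Module.Basis.span hli, hc, fun a => ?_⟩
  change ((Module.Basis.span hli a : _) : M.X) ∈ M.gr (deg a)
  rw [Module.Basis.span_apply]
  exact hb a

/-- The sum `∑ d ^ (p - 1 - i) ∘ h ∘ d ^ i` commutes with `d`. -/
theorem null_homotopic_comm (M : PDG p n k) (hp : 0 < p) (h : Module.End (PolyA n k) M.X) :
    (∑ i ∈ Finset.range p, (M.d ^ (p - 1 - i)) ∘ₗ h ∘ₗ (M.d ^ i)) ∘ₗ M.d =
      M.d ∘ₗ ∑ i ∈ Finset.range p, (M.d ^ (p - 1 - i)) ∘ₗ h ∘ₗ (M.d ^ i) := by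
  obtain ⟨q, rfl⟩ := Nat.exists_eq_add_of_le' hp
  have hd : M.d * M.d ^ q = 0 := by rw [← pow_succ', M.d_pow]
  have hd' : M.d ^ q * M.d = 0 := by rw [← pow_succ, M.d_pow]
  simp only [← Module.End.mul_eq_comp, Finset.sum_mul, Finset.mul_sum]
  rw [Finset.sum_range_succ, Finset.sum_range_succ']
  simp only [mul_assoc, hd', Nat.add_sub_cancel, Nat.sub_zero]
  simp only [← mul_assoc, hd, mul_zero, zero_mul, add_zero]
  refine Finset.sum_congr rfl fun i hi => ?_
  have hi' : q - i = (q - (i + 1)) + 1 := by have := Finset.mem_range.1 hi; lia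
  rw [hi', pow_succ' M.d (q - (i + 1)), pow_succ M.d i]
  simp only [mul_assoc]

/-- The common kernel of the functionals `ρ ∘ d ^ i` for `i < s`. -/
noncomputable def cutOut (M : PDG p n k) (ρ : M.X →ₗ[PolyA n k] PolyA n k) (s : ℕ) :
    Submodule (PolyA n k) M.X :=
  ⨅ i ∈ Finset.range s, LinearMap.ker (ρ ∘ₗ M.d ^ i)

theorem mem_cutOut {M : PDG p n k} {ρ : M.X →ₗ[PolyA n k] PolyA n k} {s : ℕ} {x : M.X} :
    x ∈ M.cutOut ρ s ↔ ∀ i < s, ρ ((M.d ^ i) x) = 0 := by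
  simp [cutOut, Submodule.mem_iInf]

theorem cutOut_succ (M : PDG p n k) (ρ : M.X →ₗ[PolyA n k] PolyA n k) (s : ℕ) :
    M.cutOut ρ (s + 1) = M.cutOut ρ s ⊓ LinearMap.ker (ρ ∘ₗ M.d ^ s) := by
  ext x
  simp only [mem_cutOut, Submodule.mem_inf, LinearMap.mem_ker, LinearMap.comp_apply]
  constructor
  · exact fun h => ⟨fun i hi => h i (by lia), h s (by lia)⟩
  · rintro ⟨h, hs⟩ i hi
    rcases Nat.lt_succ_iff_lt_or_eq.1 hi with hi | rfl
    exacts [h i hi, hs]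

theorem HasRank.exists_basis_cutOut {M : PDG p n k} {r : ℕ} (hM : M.HasRank r)
    (ρ : M.X →ₗ[PolyA n k] PolyA n k) (t : ℤ)
    (hρ : ∀ m : ℤ, ∀ x ∈ M.gr m, ρ x ∈ coeffGr n k (m + t)) {y : M.X}
    (hy : ∀ s, ρ ((M.d ^ s) y) = if s = p - 1 then 1 else 0) {s : ℕ} (hs : s ≤ p) :
    ∃ r', r' + s = r ∧ M.HasHomogeneousBasis (M.cutOut ρ s) r' := by
  induction s with
  | zero => exact ⟨r, rfl, by simpa [cutOut] using hM.hasHomogeneousBasis⟩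
  | succ s ih =>
    obtain ⟨r', hr', hb⟩ := ih (by lia)
    have hv : (M.d ^ (p - 1 - s)) y ∈ M.cutOut ρ s := by
      refine mem_cutOut.2 fun i hi => ?_
      rw [← Module.End.mul_apply, ← pow_add, hy, if_neg (by lia)]
    have h1 : (ρ ∘ₗ M.d ^ s) ((M.d ^ (p - 1 - s)) y) = 1 := by
      rw [LinearMap.comp_apply, ← Module.End.mul_apply, ← pow_add, hy, if_pos (by lia)]
    have hρ' : ∀ m : ℤ, ∀ x ∈ M.gr m, (ρ ∘ₗ M.d ^ s) x ∈ coeffGr n k (m + (t - s)) := by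
      intro m x hx
      have h := hρ _ _ (M.d_pow_mem s hx)
      rwa [show m - (s : ℤ) + t = m + (t - s) by ring] at h
    cases r' with
    | zero =>
      exfalso
      obtain ⟨ι, _, deg, b, hc, -, hspan, -⟩ := hb
      have := Fintype.card_eq_zero_iff.1 hc
      rw [Set.range_eq_empty, Submodule.span_empty] at hspan
      rw [← hspan, Submodule.mem_bot] at hv
      rw [hv, map_zero] at h1
      exact zero_ne_one h1
    | succ r' =>
      refine ⟨r', by lia, ?_⟩
      rw [cutOut_succ]
      exact hb.inf_ker _ _ hρ' hv h1

/-- A contractible summand generated by `y` and detected by `ρ` splits off. -/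
theorem HasRank.split {M : PDG p n k} {r : ℕ} (hM : M.HasRank r) (hp : 0 < p)
    (ρ : M.X →ₗ[PolyA n k] PolyA n k) {z : ℤ}
    (hρ : ∀ m : ℤ, ∀ x ∈ M.gr m, ρ x ∈ coeffGr n k (m + (p - 1 - z))) {y : M.X}
    (hyz : y ∈ M.gr z) (hy : ∀ s, ρ ((M.d ^ s) y) = if s = p - 1 then 1 else 0) :
    ∃ (N : PDG p n k) (r' : ℕ), r' < r ∧ N.HasRank r' ∧ M.HtpyEquiv N := by
  obtain ⟨r', hr', hb⟩ := hM.exists_basis_cutOut ρ _ hρ hy le_rfl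
  set W := M.cutOut ρ p
  let h : M.X →ₗ[PolyA n k] M.X := ρ.smulRight y
  have hhgr : ∀ m : ℤ, ∀ x ∈ M.gr m, h x ∈ M.gr (m + p - 1) := by
    intro m x hx
    have := M.smul_mem_gr (hρ m x hx) hyz
    rwa [show z + (m + ((p : ℤ) - 1 - z)) = m + p - 1 by ring] at this
  let π : M.X →ₗ[PolyA n k] M.X :=
    ∑ i ∈ Finset.range p, (M.d ^ (p - 1 - i)) ∘ₗ h ∘ₗ (M.d ^ i)
  have hπ : ∀ x, π x = ∑ i ∈ Finset.range p, ρ ((M.d ^ i) x) • (M.d ^ (p - 1 - i)) y := by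
    intro x
    simp [π, h, LinearMap.sum_apply]
  have hπd : ∀ x, π (M.d x) = M.d (π x) := LinearMap.congr_fun (M.null_homotopic_comm hp h)
  have hπgr : ∀ m : ℤ, ∀ x ∈ M.gr m, π x ∈ M.gr m := by
    intro m x hx
    simp only [π, LinearMap.sum_apply, LinearMap.comp_apply]
    refine Submodule.sum_mem _ fun i hi => ?_
    have := M.d_pow_mem (p - 1 - i) (hhgr _ _ (M.d_pow_mem i hx))
    convert this using 2
    have := Finset.mem_range.1 hi
    lia
  have hWd : ∀ x ∈ W, M.d x ∈ W := by
    intro x hx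
    refine mem_cutOut.2 fun i hi => ?_
    rw [← Module.End.mul_apply, ← pow_succ]
    rcases Nat.lt_or_ge (i + 1) p with h' | h'
    · exact mem_cutOut.1 hx _ h'
    · rw [show i + 1 = p by lia, M.d_pow, LinearMap.zero_apply, map_zero]
  have hπW : ∀ x, (LinearMap.id - π : M.X →ₗ[PolyA n k] M.X) x ∈ W := by
    intro x
    refine mem_cutOut.2 fun j hj => ?_
    rw [LinearMap.sub_apply, LinearMap.id_apply, map_sub, map_sub, hπ, map_sum, map_sum,
      Finset.sum_eq_single_of_mem j (Finset.mem_range.2 hj)]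
    · rw [map_smul, map_smul, ← Module.End.mul_apply, ← pow_add, hy, if_pos (by lia),
        smul_eq_mul, mul_one, sub_self]
    · intro i hi hij
      have := Finset.mem_range.1 hi
      rw [map_smul, map_smul, ← Module.End.mul_apply, ← pow_add, hy, if_neg (by lia),
        smul_zero]
  have hπ0 : ∀ x ∈ W, π x = 0 := by
    intro x hx
    rw [hπ]
    refine Finset.sum_eq_zero fun i hi => ?_
    rw [mem_cutOut.1 hx i (Finset.mem_range.1 hi), zero_smul]
  let e : M.X →ₗ[PolyA n k] W := (LinearMap.id - π).codRestrict W hπW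
  have he : ∀ x, (e x : M.X) = x - π x := fun _ => rfl
  have heW : ∀ x : W, e x = x := fun x => Subtype.ext (by rw [he, hπ0 x x.2, sub_zero])
  have hegr : ∀ m : ℤ, ∀ x ∈ M.gr m, (e x : M.X) ∈ M.gr m := fun m x hx =>
    Submodule.sub_mem _ hx (hπgr m x hx)
  refine ⟨M.restrict W hWd e heW hegr, r', by lia, hb.hasRank_restrict hWd e heW hegr,
    e, hegr, ?_, W.subtype, fun m x hx => hx, rfl, -h, 0, ?_, ?_, ?_, ?_⟩
  · ext x
    refine Subtype.ext ?_
    change M.d x - π (M.d x) = M.d (x - π x)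
    rw [hπd, map_sub]
  · exact fun m x hx => Submodule.neg_mem _ (hhgr m x hx)
  · exact fun m x hx => Submodule.zero_mem _
  · have : W.subtype ∘ₗ e - LinearMap.id = -π := by
      ext x
      change (x - π x) - x = -π x
      abel
    refine Eq.trans this ?_
    simp [π, Finset.sum_neg_distrib, LinearMap.neg_comp, LinearMap.comp_neg]
  · have : e ∘ₗ W.subtype - LinearMap.id = 0 := by
      ext x
      simp [heW]
    refine Eq.trans this ?_
    simp
    rfl

end Splitting

/-- Either `d ^ (p - 1)` vanishes modulo `(x_1,…,x_n)`, or a contractible summand splits off. -/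
theorem HasRank.minimal_or_split {M : PDG p n k} {r : ℕ} (hM : M.HasRank r) (hp : 0 < p) :
    (∀ x : M.X, (M.d ^ (p - 1)) x ∈ M.IM) ∨
      ∃ (N : PDG p n k) (r' : ℕ), r' < r ∧ N.HasRank r' ∧ M.HtpyEquiv N := by
  classical
  obtain ⟨ι, _, deg, b, hc, hb⟩ := id hM
  by_cases hall : ∀ a j, constantCoeff (b.repr ((M.d ^ (p - 1)) (b a)) j) = 0
  · left
    have htop : (⊤ : Submodule (PolyA n k) M.X) ≤ M.IM.comap (M.d ^ (p - 1)) := by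
      rw [← b.span_eq, Submodule.span_le]
      rintro _ ⟨a, rfl⟩
      change (M.d ^ (p - 1)) (b a) ∈ M.IM
      rw [← b.sum_repr ((M.d ^ (p - 1)) (b a))]
      exact Submodule.sum_mem _ fun j _ => Submodule.smul_mem_smul
        (mem_span_X_of_constantCoeff_eq_zero (hall a j)) Submodule.mem_top
    exact fun x => htop Submodule.mem_top
  · right
    push Not at hall
    obtain ⟨a, j, hj⟩ := hall
    have hgr := M.repr_mem_coeffGr b hb (M.d_pow_mem (p - 1) (hb a)) j
    have hdeg := degree_eq_zero_of_constantCoeff_ne_zero hgr hj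
    have hC := eq_C_of_constantCoeff_ne_zero hgr hj
    set u : k := constantCoeff (b.repr ((M.d ^ (p - 1)) (b a)) j)
    let ρ : M.X →ₗ[PolyA n k] PolyA n k := (C u⁻¹ : PolyA n k) • b.coord j
    have hρ : ∀ m : ℤ, ∀ x ∈ M.gr m, ρ x ∈ coeffGr n k (m + (p - 1 - deg a)) := by
      intro m x hx
      have h := (isWeightedHomogeneous_C (fun _ : Fin n => (-1 : ℤ)) u⁻¹).mul
        (M.repr_mem_coeffGr b hb hx j)
      rwa [show (0 : ℤ) + (m - deg j) = m + (p - 1 - deg a) by lia] at h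
    refine hM.split hp ρ hρ (hb a) fun s => ?_
    split_ifs with hs
    · subst hs
      change C u⁻¹ * b.repr ((M.d ^ (p - 1)) (b a)) j = 1
      rw [hC, ← C_mul, inv_mul_cancel₀ hj, C_1]
    · rcases Nat.lt_or_ge s p with hsp | hsp
      · exact eq_zero_of_mem_coeffGr_of_pos (hρ _ _ (M.d_pow_mem s (hb a))) (by lia)
      · rw [pow_eq_zero_of_le hsp M.d_pow, LinearMap.zero_apply, map_zero]

theorem HasRank.exists_minimal (hp : 0 < p) (r : ℕ) : ∀ {M : PDG p n k}, M.HasRank r →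
    ∃ N : PDG p n k, N.IsFreeFG ∧ M.HtpyEquiv N ∧ ∀ x : N.X, (N.d ^ (p - 1)) x ∈ N.IM := by
  induction r using Nat.strong_induction_on with
  | _ r ih =>
    intro M hM
    rcases hM.minimal_or_split hp with h | ⟨N, r', hr', hN, hMN⟩
    · exact ⟨M, hM.isFreeFG, HtpyEquiv.refl M, h⟩
    · obtain ⟨P, hP, hNP, hmin⟩ := ih r' hr' hN
      exact ⟨P, hP, hMN.trans hNP, hmin⟩

end PDG

theorem stmt_18 (p n : ℕ) (hp : p.Prime) (k : Type) [Field k] [CharP k p]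
    (M : PDG p n k) (hfree : M.IsFreeFG) :
    ∃ Mt : PDG p n k, Mt.IsFreeFG ∧
      ∃ f : M.X →ₗ[PolyA n k] Mt.X,
        -- `f` is a morphism of `p`-DG `A`-modules:
        (∀ m : ℤ, ∀ x ∈ M.gr m, f x ∈ Mt.gr m) ∧ f ∘ₗ M.d = Mt.d ∘ₗ f ∧
        -- `f` is a homotopy equivalence:
        (∃ g : Mt.X →ₗ[PolyA n k] M.X,
          (∀ m : ℤ, ∀ y ∈ Mt.gr m, g y ∈ M.gr m) ∧ g ∘ₗ Mt.d = M.d ∘ₗ g ∧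
          ∃ (h₁ : M.X →ₗ[PolyA n k] M.X) (h₂ : Mt.X →ₗ[PolyA n k] Mt.X),
            (∀ m : ℤ, ∀ x ∈ M.gr m, h₁ x ∈ M.gr (m + p - 1)) ∧
            (∀ m : ℤ, ∀ y ∈ Mt.gr m, h₂ y ∈ Mt.gr (m + p - 1)) ∧
            g ∘ₗ f - LinearMap.id =
              ∑ i ∈ Finset.range p, (M.d ^ (p - 1 - i)) ∘ₗ h₁ ∘ₗ (M.d ^ i) ∧
            f ∘ₗ g - LinearMap.id =
              ∑ i ∈ Finset.range p, (Mt.d ^ (p - 1 - i)) ∘ₗ h₂ ∘ₗ (Mt.d ^ i)) ∧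
        -- the differential of `M̃ ⊗_A k` is `(p-1)`-nilpotent:
        (∀ x : Mt.X, (Mt.d ^ (p - 1)) x ∈ Mt.IM) := by
  obtain ⟨ι, hι, deg, b, hb⟩ := hfree
  obtain ⟨N, hN, ⟨f, fgr, fd, hequiv⟩, hmin⟩ :=
    PDG.HasRank.exists_minimal hp.pos _ (M := M) ⟨ι, hι, deg, b, rfl, hb⟩
  exact ⟨N, hN, f, fgr, fd, hequiv, hmin⟩
end
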